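/- Let p be a prime and suppose the finite group G is a semidirect product G = P ⋊ H of a normal Sylow p-subgroup P and a subgroup H of order prime to p. Then the following are equivalent: (1) for every finitely generated projective 𝔽_pG-module Q there exists a finitely generated ℤ_(p)G-module M, projective as a ℤ_(p)-module, such that 𝔽_p ⊗_{ℤ_(p)} M and Q have the same composition factors counted with multiplicity as 𝔽_pG-modules (i.e., α(G⁺(ℚG)) ⊇ β(K⁺(𝔽_pG)) in the Grothendieck group of 𝔽_pG); (2) ℤ_(p)G is semiperfect; (3) ℤ_(p)H is semiperfect. -/

import Mathlib

/-- The Jacobson radical of a (possibly noncommutative) ring, as a two-sided ideal: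
the intersection of all maximal left ideals. -/
def ringJacobson (R : Type*) [Ring R] : TwoSidedIdeal R :=
  TwoSidedIdeal.jacobson ⊥

/-- A ring `R` is *semiperfect* if `R / J(R)` is a semisimple (artinian) ring and every
idempotent of `R / J(R)` can be lifted to an idempotent of `R`. -/
def IsSemiperfectRing (R : Type*) [Ring R] : Prop :=
  IsSemisimpleRing (ringJacobson R).ringCon.Quotient ∧
  ∀ x : (ringJacobson R).ringCon.Quotient, IsIdempotentElem x →
    ∃ e : R, IsIdempotentElem e ∧ (ringJacobson R).ringCon.mk' e = x

instance int_span_prime_isPrime (p : ℕ) [hp : Fact p.Prime] :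
    (Ideal.span {(p : ℤ)}).IsPrime :=
  (Ideal.span_singleton_prime (by exact_mod_cast hp.out.ne_zero)).mpr
    (Int.prime_iff_natAbs_prime.mpr (by simpa using hp.out))

/-- The localisation `ℤ_(p)` of the integers at the prime `p`. -/
abbrev ZLoc (p : ℕ) [Fact p.Prime] : Type :=
  Localization.AtPrime (Ideal.span {(p : ℤ)})

/-- The reduction map `ℤ_(p) → 𝔽_p`. -/
noncomputable def locToZMod (p : ℕ) [hp : Fact p.Prime] : ZLoc p →+* ZMod p :=
  IsLocalization.lift (M := (Ideal.span {(p : ℤ)}).primeCompl)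
    (g := Int.castRingHom (ZMod p)) (by
      rintro ⟨y, hy⟩
      have h : ¬ ((p : ℤ) ∣ y) := by
        simpa [Ideal.primeCompl, Ideal.mem_span_singleton] using hy
      have : ((y : ℤ) : ZMod p) ≠ 0 := fun h0 =>
        h ((ZMod.intCast_zmod_eq_zero_iff_dvd y p).mp h0)
      simpa [isUnit_iff_ne_zero] using this)

/-- The inclusion `ℤ_(p) → ℚ`. -/
noncomputable def locToRat (p : ℕ) [hp : Fact p.Prime] : ZLoc p →+* ℚ :=
  IsLocalization.lift (M := (Ideal.span {(p : ℤ)}).primeCompl)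
    (g := Int.castRingHom ℚ) (by
      rintro ⟨y, hy⟩
      have h : ¬ ((p : ℤ) ∣ y) := by
        simpa [Ideal.primeCompl, Ideal.mem_span_singleton] using hy
      have hy0 : (y : ℤ) ≠ 0 := by rintro rfl; exact h (dvd_zero _)
      have : ((y : ℤ) : ℚ) ≠ 0 := by exact_mod_cast hy0
      simpa [isUnit_iff_ne_zero] using this)

/-- The ring homomorphism between monoid algebras induced by a homomorphism of
(commutative) coefficient rings. -/
noncomputable def MonoidAlgebra.coeffRingHom {k R : Type*} [CommSemiring k] [CommSemiring R]
    (G : Type*) [Monoid G] (f : k →+* R) : MonoidAlgebra k G →+* MonoidAlgebra R G :=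
  MonoidAlgebra.liftNCRingHom (MonoidAlgebra.singleOneRingHom.comp f) (MonoidAlgebra.of R G)
    (fun x y => by
      simpa [MonoidAlgebra.of_apply, MonoidAlgebra.singleOneRingHom] using
        MonoidAlgebra.single_commute_single (Commute.one_left y) (Commute.one_right (f x)))

/-- The reduction map `ℤ_(p)G → 𝔽_pG`. -/
noncomputable def groupRingToFp (p : ℕ) [Fact p.Prime] (G : Type*) [Group G] :
    MonoidAlgebra (ZLoc p) G →+* MonoidAlgebra (ZMod p) G :=
  MonoidAlgebra.coeffRingHom G (locToZMod p)

/-- The inclusion `ℤ_(p)G → ℚG`. -/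
noncomputable def groupRingToRat (p : ℕ) [Fact p.Prime] (G : Type*) [Group G] :
    MonoidAlgebra (ZLoc p) G →+* MonoidAlgebra ℚ G :=
  MonoidAlgebra.coeffRingHom G (locToRat p)

/-- Two modules `X` and `Y` over a ring `R` have the *same composition factors counted with
multiplicity* (equivalently, they define the same class in the Grothendieck group of finitely
generated `R`-modules) if they admit composition series of the same length whose simple
subquotients match up to isomorphism under some permutation. -/
def SameCompositionFactors (R : Type*) [Ring R] (X Y : Type*)
    [AddCommGroup X] [Module R X] [AddCommGroup Y] [Module R Y] : Prop :=
  ∃ (n : ℕ) (c : Fin (n + 1) → Submodule R X) (d : Fin (n + 1) → Submodule R Y)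
    (σ : Equiv.Perm (Fin n)),
    Monotone c ∧ Monotone d ∧
    c 0 = ⊥ ∧ c (Fin.last n) = ⊤ ∧ d 0 = ⊥ ∧ d (Fin.last n) = ⊤ ∧
    ∀ i : Fin n,
      IsSimpleModule R (↥(c i.succ) ⧸ (c i.castSucc).comap (c i.succ).subtype) ∧
      Nonempty ((↥(c i.succ) ⧸ (c i.castSucc).comap (c i.succ).subtype) ≃ₗ[R]
        (↥(d (σ i).succ) ⧸ (d (σ i).castSucc).comap (d (σ i).succ).subtype))

/-- A witness that the finitely generated projective `𝔽_pG`-module `P` lies in the image of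
the positive cone of the decomposition map: a finitely generated `ℤ_(p)G`-module `M`,
projective over `ℤ_(p)`, whose reduction modulo `p` (realised as `M/pM` via a semilinear
surjection) has the same composition factors as `P`, counted with multiplicity. -/
structure ReductionWitness (p : ℕ) [Fact p.Prime] (G : Type) [Group G]
    (P : Type) [AddCommGroup P] [Module (MonoidAlgebra (ZMod p) G) P] where
  M : Type
  [addCommGroupM : AddCommGroup M]
  [moduleLocM : Module (ZLoc p) M]
  [moduleM : Module (MonoidAlgebra (ZLoc p) G) M]
  [towerM : IsScalarTower (ZLoc p) (MonoidAlgebra (ZLoc p) G) M]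
  finite : Module.Finite (MonoidAlgebra (ZLoc p) G) M
  projectiveLoc : Module.Projective (ZLoc p) M
  X : Type
  [addCommGroupX : AddCommGroup X]
  [moduleX : Module (MonoidAlgebra (ZMod p) G) X]
  f : M →ₛₗ[groupRingToFp p G] X
  surjective : Function.Surjective f
  ker_eq : ∀ m : M,
    f m = 0 ↔ m ∈ ((Ideal.span {(p : ZLoc p)}) • (⊤ : Submodule (ZLoc p) M))
  same : SameCompositionFactors (MonoidAlgebra (ZMod p) G) X P

/-!
Write `J(R)` for the Jacobson radical. The ring homomorphism `ℤ_(p)G → 𝔽_pH` induced by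
`G → G/P ≅ H` has its kernel inside `J(ℤ_(p)G)` and a semisimple target, so `ℤ_(p)G` is semiperfect
if and only if idempotents of `𝔽_pH` lift to it. Because `H → G` splits the projection, this is
equivalent to their lifting to `ℤ_(p)H`.

If idempotents lift, then so does every finitely generated `𝔽_pH`-module, to a projective
`ℤ_(p)G`-module. A projective lift along a surjection with kernel in the radical is unique, so a
lift of `Q / J(𝔽_pG) Q` also reduces to `Q`, for every finitely generated projective `𝔽_pG`-module
`Q`.

Conversely, inflate an `𝔽_pH`-module `V` to `G`. The module `𝔽_p[G/H] ⊗ V` is induced from `H`,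
hence projective, so its restriction to `H` lifts to `ℤ_(p)H`. For `K ≤ H` the number of fixed
points of `K` on `G/H` is `|C_P(K)|`, a power of `p`, and an induction over stabilizers in
products of `H`-sets shows that some power `V ^ (p ^ N)` lifts. There are no nonzero homomorphisms
between lifts of modules with no common composition factor, so block idempotents lift. A block is
`S ^ n` with `S` simple, and `p ∤ n` because the trace form is nondegenerate; as `S ^ (p ^ N)` and
`S ^ n` both lift, cancellation lifts `S`.
-/

/-! ### Reductions of modules along a ring homomorphism -/

section Reduction

variable {A B C M N V W : Type*} [Ring A] [Ring B] [Ring C]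
  [AddCommGroup M] [Module A M] [AddCommGroup V] [Module B V]

theorem ker_smul_top_le_ker {φ : A →+* B} (f : M →ₛₗ[φ] V) :
    RingHom.ker φ • (⊤ : Submodule A M) ≤ LinearMap.ker f :=
  Submodule.smul_le.2 fun a ha m _ => by
    rw [LinearMap.mem_ker, map_smulₛₗ, (RingHom.mem_ker).1 ha, zero_smul]

theorem eq_top_of_sup_jacobson_smul_top_eq_top [Module.Finite A M] {L : Submodule A M}
    (hL : L ⊔ Ring.jacobson A • (⊤ : Submodule A M) = ⊤) : L = ⊤ := by
  by_contra hne
  obtain ⟨K, hK, hLK⟩ := (eq_top_or_exists_le_coatom L).resolve_left hne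
  have hJK : Ring.jacobson A • (⊤ : Submodule A M) ≤ K :=
    (Ring.jacobson_smul_top_le A M).trans (sInf_le hK)
  exact hK.1 (top_le_iff.1 (hL.ge.trans (sup_le hLK hJK)))

theorem exists_semilinear_lift {φ : A →+* B} {ψ : B →+* C} {σ : A →+* C} [RingHomCompTriple φ ψ σ]
    [AddCommGroup W] [Module C W] [Module.Projective A M]
    (f : V →ₛₗ[ψ] W) (hf : Function.Surjective f) (g : M →ₛₗ[σ] W) :
    ∃ h : M →ₛₗ[φ] V, f.comp h = g := by
  let _ : Module A V := Module.compHom V φ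
  let _ : Module A W := Module.compHom W σ
  let fA : V →ₗ[A] W :=
    { toFun := f
      map_add' := map_add f
      map_smul' := fun a v => by
        change f (φ a • v) = σ a • f v
        rw [map_smulₛₗ, RingHomCompTriple.comp_apply] }
  let gA : M →ₗ[A] W :=
    { toFun := g, map_add' := map_add g, map_smul' := map_smulₛₗ g }
  obtain ⟨h, hh⟩ := Module.projective_lifting_property fA gA hf
  exact ⟨{ toFun := h, map_add' := map_add h, map_smul' := map_smul h },
    LinearMap.ext fun m => LinearMap.congr_fun hh m⟩

/-- A `φ`-semilinear map `f : M → V` is a *reduction* of the `A`-module `M` along `φ : A → B` if it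
induces a bijection `M / (ker φ) M → V`. For surjective `φ` this says that `f` exhibits `V` as
the base change `B ⊗[A] M`. -/
def IsReduction {φ : A →+* B} (f : M →ₛₗ[φ] V) : Prop :=
  Function.Surjective f ∧ LinearMap.ker f ≤ RingHom.ker φ • (⊤ : Submodule A M)

namespace IsReduction

variable {φ : A →+* B} {f : M →ₛₗ[φ] V}

theorem ker_eq (hf : IsReduction f) : LinearMap.ker f = RingHom.ker φ • (⊤ : Submodule A M) :=
  hf.2.antisymm (ker_smul_top_le_ker f)

theorem exists_factor (hf : IsReduction f) (hφ : Function.Surjective φ) {ψ : B →+* C}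
    {σ : A →+* C} [RingHomCompTriple φ ψ σ] [AddCommGroup W] [Module C W] (g : M →ₛₗ[σ] W) :
    ∃ h : V →ₛₗ[ψ] W, h.comp f = g := by
  have hker : ∀ m, f m = 0 → g m = 0 := by
    have hφσ : RingHom.ker φ ≤ RingHom.ker σ := fun a ha => by
      rw [RingHom.mem_ker, ← RingHomCompTriple.comp_apply (σ₁₂ := φ) (σ₂₃ := ψ),
        (RingHom.mem_ker).1 ha, map_zero]
    exact fun m hm => ker_smul_top_le_ker g (Submodule.smul_mono_left hφσ (hf.2 hm))
  have hcongr : ∀ m n, f m = f n → g m = g n := fun m n h => by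
    rw [← sub_eq_zero, ← map_sub] at h ⊢
    exact hker _ h
  have hinv : ∀ m, g (Function.surjInv hf.1 (f m)) = g m := fun m =>
    hcongr _ _ (Function.surjInv_eq hf.1 _)
  refine ⟨⟨⟨fun v => g (Function.surjInv hf.1 v), fun v w => ?_⟩, fun b v => ?_⟩,
    LinearMap.ext hinv⟩
  · obtain ⟨m, rfl⟩ := hf.1 v
    obtain ⟨n, rfl⟩ := hf.1 w
    simp only [← map_add, hinv]
  · obtain ⟨m, rfl⟩ := hf.1 v
    obtain ⟨a, rfl⟩ := hφ b
    simp only [← map_smulₛₗ, hinv, RingHomCompTriple.comp_apply]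

theorem comp_linearEquiv (hf : IsReduction f) [AddCommGroup W] [Module B W] (e : V ≃ₗ[B] W) :
    IsReduction (e.toLinearMap.comp f) :=
  ⟨e.surjective.comp hf.1, fun m hm => hf.2 (by simpa using hm)⟩

theorem toSemilinearMap (hφ : Function.Surjective φ) : IsReduction φ.toSemilinearMap :=
  ⟨hφ, fun a (ha : a ∈ RingHom.ker φ) => by
    simpa using Submodule.smul_mem_smul ha (Submodule.mem_top (x := (1 : A)))⟩

theorem projective (hf : IsReduction f) (hφ : Function.Surjective φ) [Module.Projective A M] :
    Module.Projective B V := by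
  refine Module.Projective.of_lifting_property'' fun q hq => ?_
  obtain ⟨g, hg⟩ := exists_semilinear_lift (φ := φ) q hq f
  obtain ⟨s, hs⟩ := hf.exists_factor (ψ := RingHom.id B) hφ g
  refine ⟨s, LinearMap.ext fun v => ?_⟩
  obtain ⟨m, rfl⟩ := hf.1 v
  exact (congrArg q (LinearMap.congr_fun hs m)).trans (LinearMap.congr_fun hg m)

variable [AddCommGroup N] [Module A N]

theorem surjective_of_comp_surjective (hf : IsReduction f) (hJ : RingHom.ker φ ≤ Ring.jacobson A)
    [Module.Finite A M] {g : N →ₗ[A] M} (hg : Function.Surjective (f.comp g)) :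
    Function.Surjective g := by
  rw [← LinearMap.range_eq_top]
  refine eq_top_of_sup_jacobson_smul_top_eq_top (top_le_iff.1 fun m _ => ?_)
  obtain ⟨n, hn⟩ := hg (f m)
  have hmn : m - g n ∈ RingHom.ker φ • (⊤ : Submodule A M) := hf.2 (by
    rw [LinearMap.mem_ker, map_sub, ← hn, LinearMap.comp_apply, sub_self])
  exact Submodule.mem_sup.2 ⟨g n, ⟨n, rfl⟩, m - g n, Submodule.smul_mono_left hJ hmn, by simp⟩

theorem exists_linearEquiv (hf : IsReduction f) (hJ : RingHom.ker φ ≤ Ring.jacobson A)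
    [Module.Finite A M] [Module.Finite A N] [Module.Projective A M] [Module.Projective A N]
    {g : N →ₛₗ[φ] V} (hg : IsReduction g) : ∃ e : N ≃ₗ[A] M, ∀ n, f (e n) = g n := by
  obtain ⟨t, ht⟩ := exists_semilinear_lift (φ := RingHom.id A) f hf.1 g
  have htsurj := hf.surjective_of_comp_surjective hJ (ht ▸ hg.1)
  obtain ⟨s, hs⟩ := Module.projective_lifting_property t LinearMap.id htsurj
  have hts : Function.RightInverse s t := LinearMap.congr_fun hs
  have hgs : g.comp s = f := by rw [← ht, LinearMap.comp_assoc, hs, LinearMap.comp_id]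
  have hssurj := hg.surjective_of_comp_surjective hJ (hgs ▸ hf.1)
  have htinj := (hts.rightInverse_of_surjective hssurj).injective
  exact ⟨LinearEquiv.ofBijective t ⟨htinj, htsurj⟩, LinearMap.congr_fun ht⟩

end IsReduction

theorem exists_isReduction.{u, v, w} {A : Type u} {B : Type v} [Ring A] [Ring B] {φ : A →+* B}
    (hφ : Function.Surjective φ) (M : Type w) [AddCommGroup M] [Module A M] :
    ∃ (V : Type w) (_ : AddCommGroup V) (_ : Module B V) (f : M →ₛₗ[φ] V), IsReduction f := by
  let e := RingHom.quotientKerEquivOfSurjective hφ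
  let q := (RingHom.ker φ • (⊤ : Submodule A M)).mkQ
  let _ : Module B (M ⧸ RingHom.ker φ • (⊤ : Submodule A M)) := Module.compHom _ e.symm.toRingHom
  let f : M →ₛₗ[φ] M ⧸ RingHom.ker φ • (⊤ : Submodule A M) :=
    { toFun := q
      map_add' := map_add q
      map_smul' := fun a m => by
        change _ = e.symm (φ a) • q m
        rw [RingHom.quotientKerEquivOfSurjective_symm_apply]
        rfl }
  exact ⟨_, inferInstance, inferInstance, f, Submodule.mkQ_surjective _, fun m hm =>
    (Submodule.Quotient.mk_eq_zero _).1 hm⟩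

end Reduction

section Products

variable {A B M N V W ι : Type*} {M' V' : ι → Type*} [Ring A] [Ring B] {φ : A →+* B}
  [AddCommGroup M] [Module A M] [AddCommGroup N] [Module A N]
  [AddCommGroup V] [Module B V] [AddCommGroup W] [Module B W]
  [∀ i, AddCommGroup (M' i)] [∀ i, Module A (M' i)]
  [∀ i, AddCommGroup (V' i)] [∀ i, Module B (V' i)]

/-- The product of two semilinear maps, acting componentwise. -/
def semilinearProdMap (f : M →ₛₗ[φ] V) (g : N →ₛₗ[φ] W) : M × N →ₛₗ[φ] V × W where
  toFun := Prod.map f g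
  map_add' x y := by simp [Prod.ext_iff]
  map_smul' a x := by simp [Prod.ext_iff]

/-- The product of a family of semilinear maps, acting componentwise. -/
def semilinearPiMap (f : ∀ i, M' i →ₛₗ[φ] V' i) : (∀ i, M' i) →ₛₗ[φ] ∀ i, V' i where
  toFun := Pi.map fun i => f i
  map_add' x y := by ext; simp
  map_smul' a x := by ext; simp

namespace IsReduction

theorem prodMap {f : M →ₛₗ[φ] V} {g : N →ₛₗ[φ] W} (hf : IsReduction f) (hg : IsReduction g) :
    IsReduction (semilinearProdMap f g) := by
  refine ⟨hf.1.prodMap hg.1, fun ⟨m, n⟩ h => ?_⟩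
  have hm := Submodule.mem_comap.1 (Submodule.smul_top_le_comap_smul_top _ (LinearMap.inl A M N)
    (hf.2 (show f m = 0 from congrArg Prod.fst h)))
  have hn := Submodule.mem_comap.1 (Submodule.smul_top_le_comap_smul_top _ (LinearMap.inr A M N)
    (hg.2 (show g n = 0 from congrArg Prod.snd h)))
  simpa using add_mem hm hn

theorem piMap [Finite ι] {f : ∀ i, M' i →ₛₗ[φ] V' i} (hf : ∀ i, IsReduction (f i)) :
    IsReduction (semilinearPiMap f) := by
  classical
  have := Fintype.ofFinite ι
  refine ⟨Function.Surjective.piMap fun i => (hf i).1, fun m h => ?_⟩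
  rw [← Finset.univ_sum_single m]
  exact sum_mem fun i _ => Submodule.smul_top_le_comap_smul_top _ (LinearMap.single A M' i)
    ((hf i).2 (congrFun h i))

end IsReduction

theorem exists_retraction_ker {t : M →ₗ[A] N} {s : N →ₗ[A] M} (hs : t ∘ₗ s = LinearMap.id) :
    ∃ q : M →ₗ[A] LinearMap.ker t, q ∘ₗ (LinearMap.ker t).subtype = LinearMap.id := by
  let π : M →ₗ[A] M := LinearMap.id - s ∘ₗ t
  have hπ : ∀ m, π m ∈ LinearMap.ker t := fun m => by
    simpa [π, sub_eq_zero] using (LinearMap.congr_fun hs (t m)).symm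
  exact ⟨π.codRestrict _ hπ, by ext m; simp [π]⟩

theorem IsReduction.snd_comp_subtype_ker {f : M →ₛₗ[φ] V × W} {g : N →ₛₗ[φ] V}
    (hf : IsReduction f) (hg : IsReduction g) {t : M →ₗ[A] N} {s : N →ₗ[A] M}
    (hs : t ∘ₗ s = LinearMap.id) (ht : ∀ m, g (t m) = (f m).1) :
    IsReduction ((LinearMap.snd B V W).comp (f.comp (LinearMap.ker t).subtype)) := by
  constructor
  · intro w
    obtain ⟨m, hm⟩ := hf.1 (0, w)
    have htm : t m ∈ RingHom.ker φ • (⊤ : Submodule A N) := hg.2 (by simp [ht, hm])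
    have hst : s (t m) ∈ RingHom.ker φ • (⊤ : Submodule A M) :=
      Submodule.smul_top_le_comap_smul_top _ s htm
    refine ⟨⟨m - s (t m), ?_⟩, ?_⟩
    · simpa [sub_eq_zero] using (LinearMap.congr_fun hs (t m)).symm
    · simp [hm, LinearMap.mem_ker.1 (ker_smul_top_le_ker f hst)]
  · rintro ⟨m, hm⟩ hfm
    obtain ⟨q, hq⟩ := exists_retraction_ker hs
    have hfm' : f m = 0 := Prod.ext (by rw [← ht, LinearMap.mem_ker.1 hm, map_zero, Prod.fst_zero])
      hfm
    have hqm : q m = ⟨m, hm⟩ := LinearMap.congr_fun hq ⟨m, hm⟩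
    exact hqm ▸ Submodule.smul_top_le_comap_smul_top _ q (hf.2 hfm')

end Products

/-! ### Modules with a projective lift -/

section ProjectiveLift

universe u

variable {A : Type u} {B D V W ι : Type*} [Ring A] [Ring B] [Ring D] {φ : A →+* B}
  [AddCommGroup V] [Module B V] [AddCommGroup W] [Module B W]

/-- The `B`-module `V` is the reduction along `φ : A → B` of a finitely generated projective
`A`-module. -/
def HasProjectiveLift (φ : A →+* B) (V : Type*) [AddCommGroup V] [Module B V] : Prop :=
  ∃ (M : Type u) (_ : AddCommGroup M) (_ : Module A M) (_ : Module.Finite A M)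
    (_ : Module.Projective A M) (f : M →ₛₗ[φ] V), IsReduction f

namespace HasProjectiveLift

theorem congr (h : HasProjectiveLift φ V) (e : V ≃ₗ[B] W) : HasProjectiveLift φ W := by
  obtain ⟨M, _, _, _, _, f, hf⟩ := h
  exact ⟨M, _, _, ‹_›, ‹_›, e.toLinearMap.comp f, hf.comp_linearEquiv e⟩

theorem pi_fin {n : ℕ} {S : Fin n → Type*} [∀ i, AddCommGroup (S i)] [∀ i, Module B (S i)]
    (h : ∀ i, HasProjectiveLift φ (S i)) : HasProjectiveLift φ (∀ i, S i) := by
  choose M _ _ _ _ f hf using h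
  have : Module.Projective A (∀ i, M i) := .of_equiv DFinsupp.linearEquivFunOnFintype
  exact ⟨∀ i, M i, _, _, inferInstance, this, semilinearPiMap f, .piMap hf⟩

theorem pi [Finite ι] {S : ι → Type*} [∀ i, AddCommGroup (S i)] [∀ i, Module B (S i)]
    (h : ∀ i, HasProjectiveLift φ (S i)) : HasProjectiveLift φ (∀ i, S i) :=
  (pi_fin fun i => h ((Finite.equivFin ι).symm i)).congr
    (LinearEquiv.piCongrLeft B S (Finite.equivFin ι).symm)

theorem cancel (hJ : RingHom.ker φ ≤ Ring.jacobson A) (h : HasProjectiveLift φ (V × W))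
    (hV : HasProjectiveLift φ V) : HasProjectiveLift φ W := by
  obtain ⟨M, _, _, _, _, f, hf⟩ := h
  obtain ⟨N, _, _, _, _, g, hg⟩ := hV
  obtain ⟨t, ht⟩ := exists_semilinear_lift (φ := RingHom.id A) g hg.1
    ((LinearMap.fst B V W).comp f)
  have htsurj : Function.Surjective t :=
    hg.surjective_of_comp_surjective hJ (ht ▸ Prod.fst_surjective.comp hf.1)
  obtain ⟨s, hs⟩ := Module.projective_lifting_property t LinearMap.id htsurj
  obtain ⟨q, hq⟩ := exists_retraction_ker hs
  exact ⟨LinearMap.ker t, _, _,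
    .of_surjective q (LinearMap.surjective_of_comp_eq_id _ _ hq), .of_split _ q hq, _,
    hf.snd_comp_subtype_ker hg hs (LinearMap.congr_fun ht)⟩

theorem of_comp {ρ : A →+* D} {ψ : D →+* B} (hρ : Function.Surjective ρ)
    (hψJ : RingHom.ker ψ ≤ Ring.jacobson D) {Q : Type*} [AddCommGroup Q] [Module D Q]
    [Module.Finite D Q] [Module.Projective D Q] {g : Q →ₛₗ[ψ] V} (hg : IsReduction g)
    (hV : HasProjectiveLift (ψ.comp ρ) V) : HasProjectiveLift ρ Q := by
  obtain ⟨M, _, _, _, _, f, hf⟩ := hV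
  obtain ⟨M', _, _, r, hr⟩ := exists_isReduction hρ M
  have : RingHomCompTriple ρ ψ (ψ.comp ρ) := ⟨rfl⟩
  obtain ⟨f', rfl⟩ := hr.exists_factor (ψ := ψ) hρ f
  have hf' : IsReduction f' := by
    refine ⟨Function.Surjective.of_comp hf.1, fun x hx => ?_⟩
    obtain ⟨m, rfl⟩ := hr.1 x
    refine Submodule.smul_le (P := (RingHom.ker ψ • (⊤ : Submodule D M')).comap r) |>.2 ?_ (hf.2 hx)
    intro a ha n _
    rw [Submodule.mem_comap, map_smulₛₗ]
    exact Submodule.smul_mem_smul (show ρ a ∈ RingHom.ker ψ from ha) Submodule.mem_top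
  have : RingHomSurjective ρ := ⟨hρ⟩
  have := Module.Finite.of_surjective r hr.1
  have := hr.projective hρ
  obtain ⟨e, -⟩ := hg.exists_linearEquiv hψJ hf'
  exact congr ⟨M, _, _, ‹_›, ‹_›, r, hr⟩ e

end HasProjectiveLift

end ProjectiveLift

/-! ### Lifting idempotents -/

section Idempotents

universe u

variable {A : Type u} {B V ι : Type*} [Ring A] [Ring B] {φ : A →+* B}
  [AddCommGroup V] [Module B V]

/-- Every idempotent of `B` is the image of an idempotent of `A` under `φ : A → B`. -/
def LiftsIdempotents {A B : Type*} [Ring A] [Ring B] (φ : A →+* B) : Prop :=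
  ∀ x : B, IsIdempotentElem x → ∃ e : A, IsIdempotentElem e ∧ φ e = x

theorem mem_span_singleton_iff_mul_eq {x : B} (hx : IsIdempotentElem x) {b : B} :
    b ∈ Submodule.span B {x} ↔ b * x = b := by
  refine ⟨fun hb => ?_, fun hb => Submodule.mem_span_singleton.2 ⟨b, hb⟩⟩
  obtain ⟨c, rfl⟩ := Submodule.mem_span_singleton.1 hb
  rw [smul_eq_mul, mul_assoc, hx.eq]

theorem mem_span_singleton_one_sub_iff_mul_eq_zero {x : B} (hx : IsIdempotentElem x) {b : B} :
    b ∈ Submodule.span B {1 - x} ↔ b * x = 0 := by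
  rw [mem_span_singleton_iff_mul_eq hx.one_sub, mul_sub, mul_one, sub_eq_self]

theorem hasProjectiveLift_span_singleton_map (hφ : Function.Surjective φ) {e : A}
    (he : IsIdempotentElem e) : HasProjectiveLift φ (Submodule.span B {φ e}) := by
  let I := Submodule.span A {e}
  have heI : e ∈ I := Submodule.mem_span_singleton_self e
  have hmul : ∀ y : I, (y : A) • (⟨e, heI⟩ : I) = y := fun y =>
    Subtype.ext ((mem_span_singleton_iff_mul_eq he).1 y.2)
  let q : A →ₗ[A] I := LinearMap.toSpanSingleton A I ⟨e, heI⟩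
  have hq : q ∘ₗ I.subtype = LinearMap.id := LinearMap.ext hmul
  let f : I →ₛₗ[φ] Submodule.span B {φ e} :=
    (φ.toSemilinearMap.comp I.subtype).codRestrict _ fun y => by
      rw [mem_span_singleton_iff_mul_eq (he.map φ)]
      exact (map_mul φ _ _).symm.trans
        (congrArg φ ((mem_span_singleton_iff_mul_eq he).1 y.2))
  refine ⟨I, _, _, .of_surjective q (LinearMap.surjective_of_comp_eq_id _ _ hq),
    .of_split _ q hq, f, ?_, fun y hy => ?_⟩
  · rintro ⟨b, hb⟩
    obtain ⟨c, rfl⟩ := Submodule.mem_span_singleton.1 hb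
    obtain ⟨a, rfl⟩ := hφ c
    exact ⟨a • (⟨e, heI⟩ : I), Subtype.ext (map_mul φ a e)⟩
  · rw [← hmul y]
    exact Submodule.smul_mem_smul (show φ y = 0 from congrArg Subtype.val hy) Submodule.mem_top

theorem hasProjectiveLift_of_isSimpleModule [IsSemisimpleRing B] [Module.Finite B V]
    (h : ∀ I : Submodule B V, IsSimpleModule B I → HasProjectiveLift φ I) :
    HasProjectiveLift φ V := by
  classical
  obtain ⟨n, S, e, hS⟩ := IsSemisimpleModule.exists_linearEquiv_fin_dfinsupp B V
  exact (HasProjectiveLift.pi fun i => h (S i) (hS i)).congr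
    (e.trans DFinsupp.linearEquivFunOnFintype).symm

theorem LiftsIdempotents.hasProjectiveLift [IsSemisimpleRing B] (hφ : Function.Surjective φ)
    (h : LiftsIdempotents φ) (V : Type*) [AddCommGroup V] [Module B V] [Module.Finite B V] :
    HasProjectiveLift φ V := by
  refine hasProjectiveLift_of_isSimpleModule fun S _ => ?_
  obtain ⟨I, ⟨e⟩⟩ := IsSemisimpleRing.exists_linearEquiv_ideal_of_isSimpleModule B S
  obtain ⟨x, hx, rfl⟩ := IsSemisimpleRing.ideal_eq_span_idempotent I
  obtain ⟨y, hy, rfl⟩ := h x hx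
  exact (hasProjectiveLift_span_singleton_map hφ hy).congr e.symm

/-- The decomposition `B = Bx ⊕ B(1 - x)` given by an idempotent `x`, for a power of `B`. -/
def peirceEquiv {x : B} (hx : IsIdempotentElem x) (ι : Type*) :
    ((ι → Submodule.span B {x}) × (ι → Submodule.span B {1 - x})) ≃ₗ[B] (ι → B) where
  toFun y i := y.1 i + y.2 i
  map_add' y z := by ext; simp [add_add_add_comm]
  map_smul' b y := by ext; simp [mul_add]
  invFun b := (fun i => ⟨b i * x, Submodule.mem_span_singleton.2 ⟨b i, rfl⟩⟩,
    fun i => ⟨b i * (1 - x), Submodule.mem_span_singleton.2 ⟨b i, rfl⟩⟩)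
  left_inv y := by
    have h₁ := fun i => (mem_span_singleton_iff_mul_eq hx).1 (y.1 i).2
    have h₂ := fun i => (mem_span_singleton_one_sub_iff_mul_eq_zero hx).1 (y.2 i).2
    ext i <;> simp [add_mul, mul_sub, h₁, h₂]
  right_inv b := by ext; simp [mul_sub]

section

variable {M N : Type*} [AddCommGroup M] [Module A M] [AddCommGroup N] [Module A N]

theorem exists_pi_linearEquiv_prod [Finite ι] (hφ : Function.Surjective φ)
    (hJ : RingHom.ker φ ≤ Ring.jacobson A) [Module.Finite A M] [Module.Projective A M]
    [Module.Finite A N] [Module.Projective A N] {x : B} (hx : IsIdempotentElem x)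
    {f : M →ₛₗ[φ] ι → Submodule.span B {x}} {g : N →ₛₗ[φ] ι → Submodule.span B {1 - x}}
    (hf : IsReduction f) (hg : IsReduction g) :
    ∃ e : (M × N) ≃ₗ[A] (ι → A), ∀ y i,
      φ (e.conjRingEquiv (LinearMap.inl A M N ∘ₗ LinearMap.fst A M N) y i) = φ (y i) * x := by
  classical
  have hpi : IsReduction (semilinearPiMap fun _ : ι => φ.toSemilinearMap) :=
    .piMap fun _ => .toSemilinearMap hφ
  have : Module.Projective A (ι → A) := by
    have := Fintype.ofFinite ι
    infer_instance
  obtain ⟨e, he⟩ := hpi.exists_linearEquiv hJ ((hf.prodMap hg).comp_linearEquiv (peirceEquiv hx ι))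
  have hφe : ∀ z i, φ (e z i) = f z.1 i + g z.2 i := fun z => congrFun (he z)
  refine ⟨e, fun y i => ?_⟩
  obtain ⟨z, rfl⟩ := e.surjective y
  rw [hφe, add_mul, (mem_span_singleton_iff_mul_eq hx).1 (f z.1 i).2,
    (mem_span_singleton_one_sub_iff_mul_eq_zero hx).1 (g z.2 i).2]
  simp [hφe]

theorem isIdempotentElem_inl_comp_fst :
    IsIdempotentElem (LinearMap.inl A M N ∘ₗ LinearMap.fst A M N : Module.End A (M × N)) :=
  LinearMap.ext fun _ => rfl

theorem isIdempotentElem_apply_single [DecidableEq ι] {π : Module.End A (ι → A)}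
    (hπ : IsIdempotentElem π) (i : ι)
    (hcomm : Commute π (LinearMap.single A (fun _ => A) i ∘ₗ LinearMap.proj i)) :
    IsIdempotentElem (π (Pi.single i 1) i) := by
  have hsingle : π (Pi.single i 1) = Pi.single i (π (Pi.single i 1) i) := by
    simpa using LinearMap.congr_fun hcomm.eq (Pi.single i 1)
  have hmul : π (Pi.single i 1) i * π (Pi.single i 1) i =
      π (π (Pi.single i 1) i • Pi.single i 1) i := by
    rw [map_smul, Pi.smul_apply, smul_eq_mul]
  rw [IsIdempotentElem, hmul, ← Pi.single_smul, smul_eq_mul, mul_one, ← hsingle]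
  exact congrFun (LinearMap.congr_fun hπ _) i

theorem commute_inl_comp_fst (hMN : ∀ θ : M →ₗ[A] N, θ = 0) (hNM : ∀ θ : N →ₗ[A] M, θ = 0)
    (Θ : Module.End A (M × N)) :
    Commute (LinearMap.inl A M N ∘ₗ LinearMap.fst A M N : Module.End A (M × N)) Θ := by
  have h₁ := fun m => LinearMap.congr_fun
    (hMN (LinearMap.snd A M N ∘ₗ Θ ∘ₗ LinearMap.inl A M N)) m
  have h₂ := fun n => LinearMap.congr_fun
    (hNM (LinearMap.fst A M N ∘ₗ Θ ∘ₗ LinearMap.inr A M N)) n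
  refine LinearMap.prod_ext (LinearMap.ext fun m => ?_) (LinearMap.ext fun n => ?_)
  · exact Prod.ext rfl (h₁ m).symm
  · change ((Θ (0, n)).1, (0 : N)) = Θ (0, 0)
    rw [Prod.mk_zero_zero, map_zero]
    exact Prod.ext (h₂ n) rfl

end

theorem liftsIdempotents_of_hasProjectiveLift (hφ : Function.Surjective φ)
    (hJ : RingHom.ker φ ≤ Ring.jacobson A)
    (h : ∀ x : B, IsIdempotentElem x → HasProjectiveLift φ (Submodule.span B {x})) :
    LiftsIdempotents φ := by
  intro x hx
  obtain ⟨M, _, _, _, _, f, hf⟩ := HasProjectiveLift.pi fun _ : Unit => h x hx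
  obtain ⟨N, _, _, _, _, g, hg⟩ := HasProjectiveLift.pi fun _ : Unit => h (1 - x) hx.one_sub
  obtain ⟨e, he⟩ := exists_pi_linearEquiv_prod hφ hJ hx hf hg
  refine ⟨e.conjRingEquiv (LinearMap.inl A M N ∘ₗ LinearMap.fst A M N) (Pi.single () 1) (),
    isIdempotentElem_apply_single ?_ () ?_, by rw [he]; simp⟩
  · exact isIdempotentElem_inl_comp_fst.map e.conjRingEquiv
  · exact LinearMap.ext fun y => rfl

/-- Homomorphisms between finitely generated projective `A`-modules vanish as soon as all of them
vanish modulo `ker φ`. -/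
def ReflectsHomVanishing (φ : A →+* B) : Prop :=
  ∀ (M N : Type u) [AddCommGroup M] [Module A M] [AddCommGroup N] [Module A N]
    [Module.Finite A M] [Module.Projective A M] [Module.Finite A N] [Module.Projective A N],
    (∀ (θ : M →ₗ[A] N) (m : M), θ m ∈ RingHom.ker φ • (⊤ : Submodule A N)) →
      ∀ θ : M →ₗ[A] N, θ = 0

theorem ReflectsHomVanishing.linearMap_eq_zero (h : ReflectsHomVanishing φ)
    (hφ : Function.Surjective φ) {M N : Type u} {W : Type*} [AddCommGroup M] [Module A M]
    [AddCommGroup N] [Module A N] [AddCommGroup W] [Module B W]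
    [Module.Finite A M] [Module.Projective A M] [Module.Finite A N] [Module.Projective A N]
    {f : M →ₛₗ[φ] V} {g : N →ₛₗ[φ] W} (hf : IsReduction f) (hg : IsReduction g) {x : B}
    (hV : ∀ v : V, x • v = v) (hW : ∀ w : W, x • w = 0) (θ : M →ₗ[A] N) : θ = 0 := by
  refine h M N (fun θ m => ?_) θ
  obtain ⟨a, rfl⟩ := hφ x
  have hm : m - a • m ∈ RingHom.ker φ • (⊤ : Submodule A M) := hf.2 (by simp [hV])
  have hθm : a • θ m ∈ RingHom.ker φ • (⊤ : Submodule A N) := hg.2 (by simp [hW])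
  simpa using add_mem (Submodule.mem_comap.1 (Submodule.smul_top_le_comap_smul_top _ θ hm)) hθm

theorem hasProjectiveLift_span_singleton_of_central (hφ : Function.Surjective φ)
    (hJ : RingHom.ker φ ≤ Ring.jacobson A) (hHom : ReflectsHomVanishing φ) {x : B}
    (hx : IsIdempotentElem x) (hcentral : ∀ b, Commute x b) [Finite ι] [Nonempty ι]
    (h₁ : HasProjectiveLift φ (ι → Submodule.span B {x}))
    (h₂ : HasProjectiveLift φ (ι → Submodule.span B {1 - x})) :
    HasProjectiveLift φ (Submodule.span B {x}) := by
  classical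
  obtain ⟨M, _, _, _, _, f, hf⟩ := h₁
  obtain ⟨N, _, _, _, _, g, hg⟩ := h₂
  obtain ⟨e, he⟩ := exists_pi_linearEquiv_prod hφ hJ hx hf hg
  have hx₁ : ∀ v : ι → Submodule.span B {x}, x • v = v := fun v => by
    ext i
    exact (hcentral _).eq.trans ((mem_span_singleton_iff_mul_eq hx).1 (v i).2)
  have hx₂ : ∀ v : ι → Submodule.span B {1 - x}, x • v = 0 := fun v => by
    ext i
    exact (hcentral _).eq.trans ((mem_span_singleton_one_sub_iff_mul_eq_zero hx).1 (v i).2)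
  have hMN : ∀ θ : M →ₗ[A] N, θ = 0 := hHom.linearMap_eq_zero hφ hf hg hx₁ hx₂
  have hNM : ∀ θ : N →ₗ[A] M, θ = 0 :=
    hHom.linearMap_eq_zero (x := 1 - x) hφ hg hf (by simp [sub_smul, hx₂])
      (by simp [sub_smul, hx₁])
  let π := e.conjRingEquiv (LinearMap.inl A M N ∘ₗ LinearMap.fst A M N)
  let i : ι := Classical.arbitrary ι
  have hπ : IsIdempotentElem (π (Pi.single i 1) i) := by
    refine isIdempotentElem_apply_single (isIdempotentElem_inl_comp_fst.map e.conjRingEquiv) i ?_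
    obtain ⟨Θ, hΘ⟩ := e.conjRingEquiv.surjective
      (LinearMap.single A (fun _ => A) i ∘ₗ LinearMap.proj i)
    exact hΘ ▸ (commute_inl_comp_fst hMN hNM Θ).map e.conjRingEquiv
  have hπx : φ (π (Pi.single i 1) i) = x := by
    simp only [π, he, Pi.single_eq_same, map_one, one_mul]
  exact hπx ▸ hasProjectiveLift_span_singleton_map hφ hπ

end Idempotents

/-! ### Powers of modules with a projective lift -/

section Powers

variable {A B V W ι κ : Type*} [Ring A] [Ring B] {φ : A →+* B}
  [AddCommGroup V] [Module B V] [AddCommGroup W] [Module B W]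

namespace HasProjectiveLift

theorem reindex [Finite ι] [Finite κ] (h : HasProjectiveLift φ (ι → V))
    (hcard : Nat.card ι = Nat.card κ) : HasProjectiveLift φ (κ → V) :=
  h.congr (LinearEquiv.funCongrLeft B V (Finite.card_eq.1 hcard).some.symm)

theorem mul_fin {n : ℕ} (h : HasProjectiveLift φ (Fin n → V)) (m : ℕ) :
    HasProjectiveLift φ (Fin (m * n) → V) :=
  ((pi fun _ : Fin m => h).congr (LinearEquiv.curry B V (Fin m) (Fin n)).symm).reindex (by simp)

theorem sub_fin (hJ : RingHom.ker φ ≤ Ring.jacobson A) {n m : ℕ}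
    (h : HasProjectiveLift φ (Fin (n + m) → V)) (hn : HasProjectiveLift φ (Fin n → V)) :
    HasProjectiveLift φ (Fin m → V) :=
  cancel hJ ((h.reindex (κ := Fin n ⊕ Fin m) (by simp)).congr
    (LinearEquiv.sumArrowLequivProdArrow (Fin n) (Fin m) B V)) hn

theorem gcd_fin (hJ : RingHom.ker φ ≤ Ring.jacobson A) {n m : ℕ}
    (hn : HasProjectiveLift φ (Fin n → V)) (hm : HasProjectiveLift φ (Fin m → V)) :
    HasProjectiveLift φ (Fin (n.gcd m) → V) := by
  induction n, m using Nat.gcd.induction with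
  | H0 m => rwa [Nat.gcd_zero_left]
  | H1 n m _ ih =>
    rw [Nat.gcd_rec]
    refine ih (sub_fin hJ (n := m / n * n) ?_ (hn.mul_fin (m / n))) hn
    rwa [Nat.div_add_mod']

theorem of_coprime (hJ : RingHom.ker φ ≤ Ring.jacobson A) {n m : ℕ} (hnm : n.Coprime m)
    (hn : HasProjectiveLift φ (Fin n → V)) (hm : HasProjectiveLift φ (Fin m → V)) :
    HasProjectiveLift φ V :=
  ((hn.gcd_fin hJ hm).reindex (κ := Unit) (by simp [hnm.gcd_eq_one])).congr
    (LinearEquiv.funUnique Unit B V)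

end HasProjectiveLift

/-- Some power `V ^ (p ^ N)` is the reduction of a finitely generated projective module. -/
def HasPrimePowerLift (φ : A →+* B) (p : ℕ) (V : Type*) [AddCommGroup V] [Module B V] : Prop :=
  ∃ N : ℕ, HasProjectiveLift φ (Fin (p ^ N) → V)

variable {p : ℕ}

theorem HasProjectiveLift.hasPrimePowerLift (h : HasProjectiveLift φ V) :
    HasPrimePowerLift φ p V :=
  ⟨0, .pi fun _ => h⟩

namespace HasPrimePowerLift

theorem congr (h : HasPrimePowerLift φ p V) (e : V ≃ₗ[B] W) : HasPrimePowerLift φ p W := by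
  obtain ⟨N, h⟩ := h
  exact ⟨N, h.congr (LinearEquiv.piCongrRight fun _ => e)⟩

theorem exists_common (hV : HasPrimePowerLift φ p V) (hW : HasPrimePowerLift φ p W) :
    ∃ N, HasProjectiveLift φ (Fin (p ^ N) → V) ∧ HasProjectiveLift φ (Fin (p ^ N) → W) := by
  obtain ⟨N, hV⟩ := hV
  obtain ⟨K, hW⟩ := hW
  refine ⟨N + K, ?_, ?_⟩
  · rw [add_comm, pow_add]
    exact hV.mul_fin _
  · rw [pow_add]
    exact hW.mul_fin _

theorem pi [Finite ι] {S : ι → Type*} [∀ i, AddCommGroup (S i)] [∀ i, Module B (S i)]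
    (h : ∀ i, HasPrimePowerLift φ p (S i)) : HasPrimePowerLift φ p (∀ i, S i) := by
  classical
  have := Fintype.ofFinite ι
  choose N hN using h
  have hpow : ∀ i, HasProjectiveLift φ (Fin (p ^ ∑ j, N j) → S i) := fun i => by
    rw [← Finset.sum_erase_add _ _ (Finset.mem_univ i), pow_add]
    exact (hN i).mul_fin _
  exact ⟨_, (HasProjectiveLift.pi hpow).congr
    ((Equiv.piComm _).toLinearEquiv ⟨fun _ _ => rfl, fun _ _ => rfl⟩)⟩

theorem cancel (hJ : RingHom.ker φ ≤ Ring.jacobson A) (h : HasPrimePowerLift φ p (V × W))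
    (hV : HasPrimePowerLift φ p V) : HasPrimePowerLift φ p W := by
  obtain ⟨N, h, hV⟩ := h.exists_common hV
  exact ⟨N, .cancel hJ (h.congr ((Equiv.arrowProdEquivProdArrow _ _ _).toLinearEquiv
    ⟨fun _ _ => rfl, fun _ _ => rfl⟩)) hV⟩

theorem of_pi [Finite ι] {a : ℕ} (hι : Nat.card ι = p ^ a) (h : HasPrimePowerLift φ p (ι → V)) :
    HasPrimePowerLift φ p V := by
  obtain ⟨N, h⟩ := h
  exact ⟨N + a, (h.congr (LinearEquiv.curry B V _ ι).symm).reindex (by simp [hι, pow_add])⟩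

end HasPrimePowerLift

end Powers

/-! ### The Jacobson radical and semiperfect rings -/

section Jacobson

variable {A B C : Type*} [Ring A] [Ring B] [Ring C] {φ : A →+* B}

theorem mem_ringJacobson_iff {x : A} : x ∈ ringJacobson A ↔ x ∈ Ring.jacobson A := by
  rw [ringJacobson, ← TwoSidedIdeal.mem_asIdeal, TwoSidedIdeal.asIdeal_jacobson,
    TwoSidedIdeal.bot_asIdeal, Ideal.jacobson_bot]

theorem jacobson_eq_ker [IsSemisimpleRing B] (hφ : Function.Surjective φ)
    (hJ : RingHom.ker φ ≤ Ring.jacobson A) : Ring.jacobson A = RingHom.ker φ := by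
  have : RingHomSurjective φ := ⟨hφ⟩
  refine hJ.antisymm' fun a ha => ?_
  simpa [IsSemisimpleRing.jacobson_eq_bot] using Ring.le_comap_jacobson φ ha

theorem ker_comp_le_jacobson {ψ : B →+* C} (hφ : Function.Surjective φ)
    (hφJ : RingHom.ker φ ≤ Ring.jacobson A) (hψJ : RingHom.ker ψ ≤ Ring.jacobson B) :
    RingHom.ker (ψ.comp φ) ≤ Ring.jacobson A := by
  have : RingHomSurjective φ := ⟨hφ⟩
  have hcomap := Module.comap_jacobson_of_ker_le (f := φ.toSemilinearMap) hφ hφJ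
  exact fun a ha => hcomap.le (hψJ ha)

theorem isSemiperfectRing_iff_liftsIdempotents [IsSemisimpleRing B] (hφ : Function.Surjective φ)
    (hJ : RingHom.ker φ ≤ Ring.jacobson A) : IsSemiperfectRing A ↔ LiftsIdempotents φ := by
  have hker : (ringJacobson A).ringCon = RingCon.ker φ := by
    ext x y
    rw [TwoSidedIdeal.rel_iff, mem_ringJacobson_iff, jacobson_eq_ker hφ hJ, RingHom.sub_mem_ker_iff]
    rfl
  let e := RingCon.quotientKerEquivOfSurjective φ hφ
  have he : ∀ a, e ((RingCon.ker φ).mk' a) = φ a := fun _ => rfl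
  rw [IsSemiperfectRing, hker, and_iff_right e.symm.isSemisimpleRing]
  refine ⟨fun h x hx => ?_, fun h x hx => ?_⟩
  · obtain ⟨a, ha, hax⟩ := h (e.symm x) (hx.map e.symm)
    exact ⟨a, ha, by rw [← he, hax, e.apply_symm_apply]⟩
  · obtain ⟨a, ha, hax⟩ := h (e x) (hx.map e)
    exact ⟨a, ha, e.injective (by rw [he, hax])⟩

theorem mem_jacobson_of_forall_smul_eq_zero {a : A}
    (h : ∀ I : Ideal A, IsSimpleModule A (A ⧸ I) → ∀ s : A ⧸ I, a • s = 0) :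
    a ∈ Ring.jacobson A := by
  rw [Ring.jacobson_eq_sInf_isMaximal, Submodule.mem_sInf]
  intro I hI
  have hsmul := h I (isSimpleModule_iff_isCoatom.2 (Ideal.isMaximal_def.1 hI)) (I.mkQ 1)
  rwa [← map_smul, smul_eq_mul, mul_one, Submodule.mkQ_apply,
    Submodule.Quotient.mk_eq_zero] at hsmul

theorem algebraMap_mem_jacobson {R : Type*} [CommRing R] [Algebra R A] [Module.Finite R A] {r : R}
    (hr : r ∈ Ring.jacobson R) : algebraMap R A r ∈ Ring.jacobson A := by
  refine mem_jacobson_of_forall_smul_eq_zero fun I hI s => ?_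
  let f : A ⧸ I →ₗ[A] A ⧸ I :=
    { toFun := fun s => r • s
      map_add' := smul_add r
      map_smul' := fun a s => smul_comm r a s }
  rw [algebraMap_smul]
  rcases eq_bot_or_eq_top (LinearMap.range f) with hf | hf
  · exact LinearMap.congr_fun (LinearMap.range_eq_bot.1 hf) s
  · have hbot : (⊤ : Submodule R (A ⧸ I)) = ⊥ := by
      refine Submodule.FG.eq_bot_of_le_jacobson_smul Module.Finite.fg_top fun s _ => ?_
      obtain ⟨t, rfl⟩ := LinearMap.range_eq_top.1 hf s
      exact Submodule.smul_mem_smul hr Submodule.mem_top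
    have := (Submodule.mem_bot R).1 (hbot ▸ Submodule.mem_top (x := s))
    rw [this, smul_zero]

end Jacobson

/-! ### Reductions of group algebras -/

section GroupAlgebra

variable {R S G H : Type*} [CommRing R] [CommRing S]

theorem finite_monoidAlgebra [Finite G] : Module.Finite R (MonoidAlgebra R G) :=
  Module.Finite.equiv (MonoidAlgebra.coeffLinearEquiv R).symm

variable [Group G] [Group H]

theorem ker_mapRingHom_eq_span {f : R →+* S} {r : R} (hf : RingHom.ker f = Ideal.span {r}) :
    RingHom.ker (MonoidAlgebra.mapRingHom G f) =
      Ideal.span {algebraMap R (MonoidAlgebra R G) r} := by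
  have hr : f r = 0 := (RingHom.mem_ker).1 (hf ▸ Ideal.mem_span_singleton_self r)
  refine le_antisymm (fun x hx => ?_) (by simp [hr])
  have hcoeff : ∀ g, ∃ a, a * r = x.coeff g := fun g => by
    rw [← Ideal.mem_span_singleton', ← hf, RingHom.mem_ker, ← MonoidAlgebra.coeff_mapRingHom,
      (RingHom.mem_ker).1 hx]
    rfl
  choose a ha using hcoeff
  refine Ideal.mem_span_singleton'.2 ⟨∑ g ∈ x.coeff.support, MonoidAlgebra.single g (a g), ?_⟩
  conv_rhs => rw [← MonoidAlgebra.sum_coeff_single x]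
  rw [Finset.sum_mul, Finsupp.sum]
  exact Finset.sum_congr rfl fun g _ => by simp [MonoidAlgebra.single_mul_single, ha]

theorem of_smul_eq_self_of_isPGroup {p : ℕ} [Fact p.Prime] [CharP R p] {V : Type*} [AddCommGroup V]
    [Module (MonoidAlgebra R G) V] [IsSimpleModule (MonoidAlgebra R G) V] [Finite V]
    {N : Subgroup G} [N.Normal] (hN : IsPGroup p N) {g : G} (hg : g ∈ N) (v : V) :
    MonoidAlgebra.of R G g • v = v := by
  let _ : MulAction G V := MulAction.compHom V (MonoidAlgebra.of R G)
  let F : Submodule (MonoidAlgebra R G) V :=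
    { carrier := {v | ∀ g ∈ N, MonoidAlgebra.of R G g • v = v}
      add_mem' := fun hv hw g hg => by rw [smul_add, hv g hg, hw g hg]
      zero_mem' := fun g _ => smul_zero _
      smul_mem' := fun c v hv g hg => by
        induction c using MonoidAlgebra.induction_linear with
        | zero => simp
        | add a b ha hb => rw [add_smul, smul_add, ha, hb]
        | single h r =>
          have hconj := hv (h⁻¹ * g * h) (Subgroup.Normal.conj_mem' ‹_› g hg h)
          conv_rhs => rw [← hconj]
          rw [smul_smul, smul_smul]
          simp [MonoidAlgebra.single_mul_single, mul_assoc] }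
  have hF : F ≠ ⊥ := by
    have := IsSimpleModule.nontrivial (MonoidAlgebra R G) V
    obtain ⟨w, hw⟩ := exists_ne (0 : V)
    have hcharP : (p : MonoidAlgebra R G) = 0 := by
      rw [← map_natCast (algebraMap R (MonoidAlgebra R G)), CharP.cast_eq_zero, map_zero]
    have hpw : p • w = 0 := by
      rw [← Nat.cast_smul_eq_nsmul (MonoidAlgebra R G), hcharP, zero_smul]
    have hdvd : p ∣ Nat.card V := addOrderOf_eq_prime hpw hw ▸ addOrderOf_dvd_natCard w
    obtain ⟨b, hb, hb0⟩ := hN.exists_fixed_point_of_prime_dvd_card_of_fixed_point V hdvd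
      (a := 0) fun g => smul_zero (MonoidAlgebra.of R G g)
    exact fun h => hb0 ((Submodule.mem_bot (MonoidAlgebra R G)).1
      (h ▸ show b ∈ F from fun g hg => hb ⟨g, hg⟩)).symm
  exact ((eq_bot_or_eq_top F).resolve_left hF ▸ Submodule.mem_top : v ∈ F) g hg

theorem ker_mapDomainRingHom_le_jacobson {p : ℕ} [Fact p.Prime] [CharP R p] [Finite R] [Finite G]
    {π : G →* H} (hπ : IsPGroup p π.ker) :
    RingHom.ker (MonoidAlgebra.mapDomainRingHom R π) ≤ Ring.jacobson (MonoidAlgebra R G) := by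
  have := finite_monoidAlgebra (R := R) (G := G)
  have : Finite (MonoidAlgebra R G) := Module.finite_of_finite R
  refine fun x hx => mem_jacobson_of_forall_smul_eq_zero fun I hI s => ?_
  have : Finite (MonoidAlgebra R G ⧸ I) := Quotient.finite _
  let ρ : H → G := Function.invFun π
  have hρ : ∀ g, π (ρ (π g)) = π g := fun g => Function.invFun_eq ⟨g, rfl⟩
  have hsmul : ∀ y : MonoidAlgebra R G,
      y • s = MonoidAlgebra.mapDomain ρ (MonoidAlgebra.mapDomain π y) • s := by
    intro y
    induction y using MonoidAlgebra.induction_linear with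
    | zero => simp
    | add a b ha hb => simp only [add_smul, MonoidAlgebra.mapDomain_add, ha, hb]
    | single g r =>
      have hker : (ρ (π g))⁻¹ * g ∈ π.ker := by
        rw [MonoidHom.mem_ker, map_mul, map_inv, hρ, inv_mul_cancel]
      have hfix := of_smul_eq_self_of_isPGroup (R := R) hπ hker s
      simp only [MonoidAlgebra.mapDomain_single]
      conv_rhs => rw [← hfix, smul_smul]
      simp [MonoidAlgebra.single_mul_single]
  rw [hsmul, ← MonoidAlgebra.mapDomainRingHom_apply, (RingHom.mem_ker).1 hx]
  simp

theorem mapDomainRingHom_leftInverse {π : G →* H} {ι : H →* G} (hι : Function.LeftInverse π ι) :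
    Function.LeftInverse (MonoidAlgebra.mapDomainRingHom R π)
      (MonoidAlgebra.mapDomainRingHom R ι) := fun x => by
  rw [← RingHom.comp_apply, ← MonoidAlgebra.mapDomainRingHom_comp,
    show π.comp ι = MonoidHom.id H from MonoidHom.ext hι, MonoidAlgebra.mapDomainRingHom_id,
    RingHom.id_apply]

end GroupAlgebra

section LocalizationAtPrime

variable {p : ℕ} [Fact p.Prime] {G H : Type*} [Group G] [Group H]

theorem locToZMod_surjective : Function.Surjective (locToZMod p) := fun x => by
  obtain ⟨n, rfl⟩ := ZMod.intCast_surjective x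
  exact ⟨n, map_intCast _ n⟩

theorem ker_locToZMod : RingHom.ker (locToZMod p) = Ideal.span {(p : ZLoc p)} := by
  refine le_antisymm (fun x hx => ?_) (by simp)
  obtain ⟨a, s, rfl⟩ := IsLocalization.exists_mk'_eq (Ideal.span {(p : ℤ)}).primeCompl x
  have ha : locToZMod p (algebraMap ℤ (ZLoc p) a) = 0 := by
    rw [← IsLocalization.mk'_spec (ZLoc p) a s, map_mul, (RingHom.mem_ker).1 hx, zero_mul]
  obtain ⟨b, rfl⟩ := (ZMod.intCast_zmod_eq_zero_iff_dvd a p).1 (by simpa using ha)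
  rw [Ideal.mem_span_singleton, ← IsLocalization.mul_mk'_eq_mk'_of_mul]
  simp

theorem ker_locToZMod_le_jacobson : RingHom.ker (locToZMod p) ≤ Ring.jacobson (ZLoc p) := by
  rw [IsLocalRing.ringJacobson_eq_maximalIdeal]
  exact IsLocalRing.le_maximalIdeal (RingHom.ker_ne_top _)

theorem groupRingToFp_eq_mapRingHom :
    groupRingToFp p G = MonoidAlgebra.mapRingHom G (locToZMod p) := by
  ext <;> simp [groupRingToFp, MonoidAlgebra.coeffRingHom, MonoidAlgebra.singleOneRingHom]

theorem groupRingToFp_surjective : Function.Surjective (groupRingToFp p G) := by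
  rw [groupRingToFp_eq_mapRingHom]
  exact MonoidAlgebra.map_surjective _ locToZMod_surjective

theorem ker_groupRingToFp :
    RingHom.ker (groupRingToFp p G) = Ideal.span {(p : MonoidAlgebra (ZLoc p) G)} := by
  rw [groupRingToFp_eq_mapRingHom, ker_mapRingHom_eq_span ker_locToZMod, map_natCast]

theorem natCast_mem_jacobson [Finite G] :
    (p : MonoidAlgebra (ZLoc p) G) ∈ Ring.jacobson (MonoidAlgebra (ZLoc p) G) := by
  have := finite_monoidAlgebra (R := ZLoc p) (G := G)
  have hp : (p : ZLoc p) ∈ Ring.jacobson (ZLoc p) :=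
    ker_locToZMod_le_jacobson (ker_locToZMod (p := p) ▸ Ideal.mem_span_singleton_self _)
  simpa using algebraMap_mem_jacobson (A := MonoidAlgebra (ZLoc p) G) hp

theorem ker_groupRingToFp_le_jacobson [Finite G] :
    RingHom.ker (groupRingToFp p G) ≤ Ring.jacobson (MonoidAlgebra (ZLoc p) G) := by
  rw [ker_groupRingToFp, Ideal.span_singleton_le_iff_mem]
  exact natCast_mem_jacobson

theorem groupRingToFp_comp_mapDomainRingHom (π : G →* H) :
    (groupRingToFp p H).comp (MonoidAlgebra.mapDomainRingHom (ZLoc p) π) =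
      (MonoidAlgebra.mapDomainRingHom (ZMod p) π).comp (groupRingToFp p G) := by
  simp only [groupRingToFp_eq_mapRingHom, MonoidAlgebra.mapRingHom_comp_mapDomainRingHom]

theorem mapDomainRingHom_comp_groupRingToFp_surjective {π : G →* H} {ι : H →* G}
    (hι : Function.LeftInverse π ι) : Function.Surjective
      ((MonoidAlgebra.mapDomainRingHom (ZMod p) π).comp (groupRingToFp p G)) := by
  rw [RingHom.coe_comp]
  exact (mapDomainRingHom_leftInverse hι).surjective.comp groupRingToFp_surjective

theorem isSemisimpleRing_monoidAlgebra_zmod [Finite H] (hH : ¬ p ∣ Nat.card H) :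
    IsSemisimpleRing (MonoidAlgebra (ZMod p) H) := by
  have : NeZero (Nat.card H : ZMod p) := ⟨fun h => hH ((ZMod.natCast_eq_zero_iff _ _).1 h)⟩
  infer_instance

theorem liftsIdempotents_mapDomainRingHom_comp_iff {π : G →* H} {ι : H →* G}
    (hι : Function.LeftInverse π ι) :
    LiftsIdempotents ((MonoidAlgebra.mapDomainRingHom (ZMod p) π).comp (groupRingToFp p G)) ↔
      LiftsIdempotents (groupRingToFp p H) := by
  refine ⟨fun h x hx => ?_, fun h x hx => ?_⟩
  · obtain ⟨e, he, rfl⟩ := h x hx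
    exact ⟨_, he.map (MonoidAlgebra.mapDomainRingHom (ZLoc p) π),
      RingHom.congr_fun (groupRingToFp_comp_mapDomainRingHom π) e⟩
  · obtain ⟨e, he, rfl⟩ := h x hx
    refine ⟨_, he.map (MonoidAlgebra.mapDomainRingHom (ZLoc p) ι), ?_⟩
    rw [← groupRingToFp_comp_mapDomainRingHom, RingHom.comp_apply,
      mapDomainRingHom_leftInverse hι]

end LocalizationAtPrime

/-! ### Simple modules of which a prime power lifts -/

section HomVanishing

variable {A B M N : Type*} [Ring A] [Ring B] {φ : A →+* B} [AddCommGroup M] [Module A M]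
  [AddCommGroup N] [Module A N]

theorem exists_smul_linearMap_eq [Module.Projective A M] {c : A} (hc : ∀ a, Commute c a)
    {θ : M →ₗ[A] N} (hθ : ∀ m, θ m ∈ Ideal.span {c} • (⊤ : Submodule A N)) :
    ∃ θ' : M →ₗ[A] N, ∀ m, θ m = c • θ' m := by
  let μ : N →ₗ[A] N :=
    { toFun := fun n => c • n
      map_add' := smul_add c
      map_smul' := fun a n => by simp only [smul_smul, (hc a).eq, RingHom.id_apply] }
  have hμ : Ideal.span {c} • (⊤ : Submodule A N) ≤ LinearMap.range μ := by
    refine Submodule.smul_le.2 fun a ha n _ => ?_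
    obtain ⟨b, rfl⟩ := Ideal.mem_span_singleton'.1 ha
    exact ⟨b • n, by simp [μ, smul_smul]⟩
  obtain ⟨θ', hθ'⟩ := Module.projective_lifting_property μ.rangeRestrict
    (θ.codRestrict (LinearMap.range μ) fun m => hμ (hθ m)) μ.surjective_rangeRestrict
  exact ⟨θ', fun m => (congrArg Subtype.val (LinearMap.congr_fun hθ' m)).symm⟩

-- Nakayama's lemma, applied to the sum of the images of all homomorphisms `M → N`.
theorem reflectsHomVanishing_of_central [IsNoetherianRing A] {c : A} (hc : ∀ a, Commute c a)
    (hcJ : c ∈ Ring.jacobson A) (hφ : RingHom.ker φ = Ideal.span {c}) :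
    ReflectsHomVanishing φ := by
  intro M N _ _ _ _ _ _ _ _ h θ
  let T : Submodule A N := ⨆ θ : M →ₗ[A] N, LinearMap.range θ
  have hrange : ∀ θ : M →ₗ[A] N, LinearMap.range θ ≤ T := le_iSup fun θ : M →ₗ[A] N => θ.range
  have hT : T ≤ Ring.jacobson A • T := iSup_le fun θ => by
    rintro _ ⟨m, rfl⟩
    obtain ⟨θ', hθ'⟩ := exists_smul_linearMap_eq hc fun m => hφ ▸ h θ m
    exact hθ' m ▸ Submodule.smul_mem_smul hcJ (hrange θ' ⟨m, rfl⟩)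
  have hbot : T = ⊥ :=
    Submodule.FG.eq_bot_of_le_jacobson_smul (IsNoetherian.noetherian T) hT
  exact LinearMap.range_eq_bot.1 (le_bot_iff.1 (hbot ▸ hrange θ))

theorem reflectsHomVanishing_groupRingToFp {p : ℕ} [Fact p.Prime] {H : Type*} [Group H]
    [Finite H] : ReflectsHomVanishing (groupRingToFp p H) := by
  have := finite_monoidAlgebra (R := ZLoc p) (G := H)
  have : IsNoetherianRing (ZLoc p) :=
    IsLocalization.isNoetherianRing (Ideal.span {(p : ℤ)}).primeCompl _ inferInstance
  have := IsNoetherianRing.of_finite (ZLoc p) (MonoidAlgebra (ZLoc p) H)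
  exact reflectsHomVanishing_of_central (Nat.cast_commute p) natCast_mem_jacobson ker_groupRingToFp

end HomVanishing

section CentralIdempotent

variable {B : Type*} [Ring B] [IsSemisimpleRing B]

theorem eq_zero_of_forall_mul_mul_self_eq_zero {y : B} (h : ∀ c, y * c * y = 0) : y = 0 := by
  obtain ⟨f, hf, hspan⟩ := IsSemisimpleRing.ideal_eq_span_idempotent (Ideal.span {y})
  obtain ⟨c, hc⟩ := Ideal.mem_span_singleton'.1 (hspan ▸ Ideal.mem_span_singleton_self f)
  have hf0 : f = 0 := by rw [← hf.eq, ← hc, mul_assoc, ← mul_assoc y, h, mul_zero]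
  simpa [hf0] using hspan

theorem commute_of_isTwoSided_span {x : B} (hx : IsIdempotentElem x)
    (htwo : (Ideal.span {x}).IsTwoSided) (b : B) : Commute x b := by
  have hleft : ∀ b, x * b * x = x * b := fun b => (mem_span_singleton_iff_mul_eq hx).1
    (htwo.mul_mem_of_left b (Ideal.mem_span_singleton_self x))
  have hright : b * x - x * b * x = 0 := by
    refine eq_zero_of_forall_mul_mul_self_eq_zero fun c => ?_
    have hvanish : x * c * (1 - x) = 0 := by rw [mul_sub, mul_one, hleft, sub_self]
    calc (b * x - x * b * x) * c * (b * x - x * b * x)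
        = (1 - x) * b * (x * c * (1 - x)) * (b * x) := by noncomm_ring
      _ = 0 := by rw [hvanish, mul_zero, zero_mul]
  rw [sub_eq_zero, hleft] at hright
  exact hright.symm

theorem exists_central_idempotent_linearEquiv (S : Ideal B) [IsSimpleModule B S] :
    ∃ x : B, IsIdempotentElem x ∧ (∀ b, Commute x b) ∧ x ≠ 0 ∧
      ∃ n, Nonempty (Submodule.span B {x} ≃ₗ[B] (Fin n → S)) := by
  have htwo := Submodule.IsFullyInvariant.isotypicComponent B B S
  have hlt := bot_lt_isotypicComponent (R := B) S
  obtain ⟨n, e⟩ := (IsIsotypicOfType.isotypicComponent B B S).linearEquiv_fun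
  obtain ⟨x, hx, hspan⟩ := IsSemisimpleRing.ideal_eq_span_idempotent (isotypicComponent B B S)
  rw [hspan] at htwo hlt e
  refine ⟨x, hx, commute_of_isTwoSided_span hx (isFullyInvariant_iff_isTwoSided.1 htwo), ?_, n, e⟩
  rintro rfl
  simp at hlt

end CentralIdempotent

section Trace

theorem trace_mulLeft_monoidAlgebra {k H : Type*} [CommRing k] [Group H] [Finite H]
    (y : MonoidAlgebra k H) :
    LinearMap.trace k (MonoidAlgebra k H) (LinearMap.mulLeft k y) = Nat.card H * y.coeff 1 := by
  classical
  have := Fintype.ofFinite H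
  have hdiag : ∀ g, (LinearMap.toMatrix (MonoidAlgebra.basis H k) (MonoidAlgebra.basis H k)
      (LinearMap.mulLeft k y)).diag g = y.coeff 1 := fun g => by
    rw [Matrix.diag_apply, LinearMap.toMatrix_apply, LinearMap.mulLeft_apply,
      show MonoidAlgebra.basis H k g = MonoidAlgebra.single g 1 by simp]
    change (y * MonoidAlgebra.single g 1).coeff g = _
    simp [MonoidAlgebra.coeff_mul_single_apply]
  rw [LinearMap.trace_eq_matrix_trace k (MonoidAlgebra.basis H k), Matrix.trace,
    Finset.sum_congr rfl fun g _ => hdiag g, Finset.sum_const, Finset.card_univ, nsmul_eq_mul,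
    Nat.card_eq_fintype_card]

variable {k B S : Type*} [Field k] [Ring B] [Algebra k B] [FiniteDimensional k B]
  [AddCommGroup S] [Module k S] [Module B S] [IsScalarTower k B S] [FiniteDimensional k S]

theorem trace_mulLeft_mul_eq_nsmul {x : B} (hx : IsIdempotentElem x) (hcentral : ∀ b, Commute x b)
    {n : ℕ} (e : Submodule.span B {x} ≃ₗ[B] (Fin n → S)) (b : B) :
    LinearMap.trace k B (LinearMap.mulLeft k (b * x)) =
      n • LinearMap.trace k S (Algebra.lsmul k k S b) := by
  let u (j : Fin n) : S →ₗ[B] B :=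
    (Submodule.span B {x}).subtype ∘ₗ e.symm.toLinearMap ∘ₗ LinearMap.single B (fun _ => S) j
  let w : B →ₗ[B] Submodule.span B {x} :=
    (LinearMap.toSpanSingleton B B x).codRestrict _ fun b => Submodule.mem_span_singleton.2 ⟨b, rfl⟩
  let v (j : Fin n) : B →ₗ[B] S := LinearMap.proj j ∘ₗ e.toLinearMap ∘ₗ w
  have hw : ∀ y : Submodule.span B {x}, w y = y := fun y =>
    Subtype.ext ((mem_span_singleton_iff_mul_eq hx).1 y.2)
  have hvu : ∀ j s, v j (u j s) = s := fun j s => by simp [u, v, hw]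
  have huv : ∀ c, ∑ j, u j (v j c) = c * x := fun c => by
    change ∑ j, (Submodule.span B {x}).subtype (e.symm (Pi.single j (e (w c) j))) = c * x
    rw [← map_sum, ← map_sum, Finset.univ_sum_single, LinearEquiv.symm_apply_apply]
    rfl
  have hsum : LinearMap.mulLeft k (b * x) = ∑ j, (LinearMap.mulLeft k b ∘ₗ
      (u j).restrictScalars k) ∘ₗ (v j).restrictScalars k := LinearMap.ext fun c => by
    rw [LinearMap.sum_apply, LinearMap.mulLeft_apply, mul_assoc, (hcentral c).eq, ← huv,
      Finset.mul_sum]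
    rfl
  have htrace : ∀ j, LinearMap.trace k B ((LinearMap.mulLeft k b ∘ₗ (u j).restrictScalars k) ∘ₗ
      (v j).restrictScalars k) = LinearMap.trace k S (Algebra.lsmul k k S b) := fun j => by
    rw [LinearMap.trace_comp_comm']
    congr 1
    ext s
    change v j (b • u j s) = b • s
    rw [map_smul, hvu]
  rw [hsum, map_sum, Finset.sum_congr rfl fun j _ => htrace j, Finset.sum_const,
    Finset.card_univ, Fintype.card_fin]

theorem natCast_ne_zero_of_span_linearEquiv {H : Type*} [Group H] [Finite H]
    (hH : (Nat.card H : k) ≠ 0) [Module (MonoidAlgebra k H) S]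
    [IsScalarTower k (MonoidAlgebra k H) S] {x : MonoidAlgebra k H} (hx : IsIdempotentElem x)
    (hcentral : ∀ b, Commute x b) (hx0 : x ≠ 0) {n : ℕ}
    (e : Submodule.span (MonoidAlgebra k H) {x} ≃ₗ[MonoidAlgebra k H] (Fin n → S)) :
    (n : k) ≠ 0 := by
  intro hn
  have := finite_monoidAlgebra (R := k) (G := H)
  refine hx0 (MonoidAlgebra.ext (Finsupp.ext fun h => ?_))
  have htrace :=
    trace_mulLeft_mul_eq_nsmul (k := k) hx hcentral e (MonoidAlgebra.single h⁻¹ (1 : k))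
  rw [trace_mulLeft_monoidAlgebra, nsmul_eq_mul, hn, zero_mul] at htrace
  simpa [MonoidAlgebra.coeff_single_mul_apply, hH] using htrace

end Trace

section PrimePowerLift

variable {p : ℕ} [hp : Fact p.Prime] {H : Type*} [Group H] [Finite H]

theorem hasProjectiveLift_of_hasPrimePowerLift (hH : ¬ p ∣ Nat.card H)
    (h : ∀ I : Ideal (MonoidAlgebra (ZMod p) H), HasPrimePowerLift (groupRingToFp p H) p I)
    (S : Ideal (MonoidAlgebra (ZMod p) H)) [IsSimpleModule (MonoidAlgebra (ZMod p) H) S] :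
    HasProjectiveLift (groupRingToFp p H) S := by
  have := isSemisimpleRing_monoidAlgebra_zmod hH
  have := finite_monoidAlgebra (R := ZMod p) (G := H)
  obtain ⟨x, hx, hcentral, hx0, n, ⟨e⟩⟩ := exists_central_idempotent_linearEquiv S
  obtain ⟨N, hN₁, hN₂⟩ := (h (Submodule.span _ {x})).exists_common
    (h (Submodule.span _ {1 - x}))
  have : Nonempty (Fin (p ^ N)) := ⟨⟨0, pow_pos hp.out.pos N⟩⟩
  have hblock := hasProjectiveLift_span_singleton_of_central (φ := groupRingToFp p H)
    groupRingToFp_surjective ker_groupRingToFp_le_jacobson reflectsHomVanishing_groupRingToFp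
    hx hcentral hN₁ hN₂
  have hcard : (Nat.card H : ZMod p) ≠ 0 := fun h0 => hH ((ZMod.natCast_eq_zero_iff _ _).1 h0)
  have hn : ¬ p ∣ n := fun hdvd => natCast_ne_zero_of_span_linearEquiv hcard hx hcentral hx0 e
    ((ZMod.natCast_eq_zero_iff _ _).2 hdvd)
  obtain ⟨K, hK⟩ := h S
  exact HasProjectiveLift.of_coprime ker_groupRingToFp_le_jacobson
    (((Nat.Prime.coprime_iff_not_dvd hp.out).2 hn).symm.pow_right K) (hblock.congr e) hK

theorem liftsIdempotents_of_hasPrimePowerLift (hH : ¬ p ∣ Nat.card H)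
    (h : ∀ I : Ideal (MonoidAlgebra (ZMod p) H), HasPrimePowerLift (groupRingToFp p H) p I) :
    LiftsIdempotents (groupRingToFp p H) := by
  have := isSemisimpleRing_monoidAlgebra_zmod hH
  refine liftsIdempotents_of_hasProjectiveLift groupRingToFp_surjective
    ker_groupRingToFp_le_jacobson fun x _ => hasProjectiveLift_of_isSimpleModule fun S _ => ?_
  obtain ⟨I, ⟨e⟩⟩ := IsSemisimpleRing.exists_linearEquiv_ideal_of_isSimpleModule
    (MonoidAlgebra (ZMod p) H) S
  have : IsSimpleModule (MonoidAlgebra (ZMod p) H) I := .congr e.symm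
  exact (hasProjectiveLift_of_hasPrimePowerLift hH h I).congr e.symm

end PrimePowerLift

/-! ### Twisted function modules -/

section TwistedFun

variable {k Γ X Y V M N : Type*} [CommRing k] [Group Γ]

theorem map_smul_of_forall_single [AddCommGroup M] [AddCommGroup N]
    [Module (MonoidAlgebra k Γ) M] [Module (MonoidAlgebra k Γ) N] (T : M →+ N)
    (h : ∀ (g : Γ) (r : k) m, T (MonoidAlgebra.single g r • m) = MonoidAlgebra.single g r • T m)
    (c : MonoidAlgebra k Γ) (m : M) : T (c • m) = c • T m := by
  induction c using MonoidAlgebra.induction_linear with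
  | zero => simp
  | add a b ha hb => rw [add_smul, map_add, ha, hb, add_smul]
  | single g r => exact h g r m

/-- Additive equivalences compatible with the action of the monomials are linear. -/
def linearEquivOfSingle [AddCommGroup M] [AddCommGroup N]
    [Module (MonoidAlgebra k Γ) M] [Module (MonoidAlgebra k Γ) N] (T : M ≃+ N)
    (h : ∀ (g : Γ) (r : k) m, T (MonoidAlgebra.single g r • m) = MonoidAlgebra.single g r • T m) :
    M ≃ₗ[MonoidAlgebra k Γ] N :=
  { T with map_smul' := map_smul_of_forall_single (T : M →+ N) h }

/-- The functions from a `Γ`-set `X` to a `k[Γ]`-module `V`, on which `g : Γ` acts by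
`(g • f) x = g • f (g⁻¹ • x)`. For finite `X` this is the module `k[X] ⊗ V` with the diagonal
action. It is a type synonym because `X → V` already carries the pointwise action. -/
def TwistedFun (X V : Type*) : Type _ := X → V

namespace TwistedFun

instance [AddCommGroup V] : AddCommGroup (TwistedFun X V) :=
  inferInstanceAs (AddCommGroup (X → V))

instance [Finite X] [Finite V] : Finite (TwistedFun X V) :=
  inferInstanceAs (Finite (X → V))

variable [MulAction Γ X] [MulAction Γ Y] [AddCommGroup V]
  [Module (MonoidAlgebra k Γ) V]

variable (k Γ X V) in
/-- The diagonal action of `Γ` on functions `X → V`. -/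
noncomputable def groupAction : Γ →* AddMonoid.End (X → V) where
  toFun g := AddMonoidHom.mk' (fun f x => MonoidAlgebra.of k Γ g • f (g⁻¹ • x))
    fun _ _ => funext fun _ => smul_add _ _ _
  map_one' := by
    ext f x
    change MonoidAlgebra.of k Γ 1 • f ((1 : Γ)⁻¹ • x) = f x
    rw [map_one, one_smul, inv_one, one_smul]
  map_mul' a b := by
    ext f x
    change MonoidAlgebra.of k Γ (a * b) • f ((a * b)⁻¹ • x) =
      MonoidAlgebra.of k Γ a • MonoidAlgebra.of k Γ b • f (b⁻¹ • a⁻¹ • x)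
    rw [map_mul, mul_smul, mul_inv_rev, mul_smul]

variable (k Γ X V) in
/-- The extension of the diagonal action of `Γ` to the group algebra. -/
noncomputable def algebraAction : MonoidAlgebra k Γ →+* AddMonoid.End (X → V) :=
  MonoidAlgebra.liftNCRingHom
    ((Module.toAddMonoidEnd (MonoidAlgebra k Γ) (X → V)).comp (algebraMap k (MonoidAlgebra k Γ)))
    (groupAction k Γ X V) fun r g => by
      ext f x
      change algebraMap k (MonoidAlgebra k Γ) r • MonoidAlgebra.of k Γ g • f (g⁻¹ • x) =
        MonoidAlgebra.of k Γ g • algebraMap k (MonoidAlgebra k Γ) r • f (g⁻¹ • x)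
      rw [smul_smul, smul_smul, Algebra.commutes]

noncomputable instance : Module (MonoidAlgebra k Γ) (TwistedFun X V) :=
  Module.compHom (X → V) (algebraAction k Γ X V)

theorem single_smul_apply (g : Γ) (r : k) (f : TwistedFun X V) (x : X) :
    (MonoidAlgebra.single g r • f) x = MonoidAlgebra.single g r • f (g⁻¹ • x) := by
  have hsingle : algebraAction k Γ X V (MonoidAlgebra.single g r) = _ :=
    MonoidAlgebra.liftNCRingHom_single _ _ _ g r
  change algebraAction k Γ X V (MonoidAlgebra.single g r) f x = _
  rw [hsingle]
  change algebraMap k (MonoidAlgebra k Γ) r • MonoidAlgebra.of k Γ g • f (g⁻¹ • x) = _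
  rw [smul_smul]
  simp [MonoidAlgebra.single_mul_single]

variable (k Γ Y X V) in
/-- Currying identifies `k[Y × X] ⊗ V` with `k[Y] ⊗ (k[X] ⊗ V)`. -/
noncomputable def curryEquiv :
    TwistedFun (Y × X) V ≃ₗ[MonoidAlgebra k Γ] TwistedFun Y (TwistedFun X V) :=
  linearEquivOfSingle
    { toFun := fun f y x => f (y, x)
      invFun := fun f yx => f yx.1 yx.2
      map_add' := fun _ _ => rfl } fun g r f => by
    funext y x
    rw [single_smul_apply, single_smul_apply]
    exact single_smul_apply g r f (y, x)

variable (k Γ X V) in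
/-- The one-element `Γ`-set gives back `V`. -/
noncomputable def uniqueEquiv [Unique X] : TwistedFun X V ≃ₗ[MonoidAlgebra k Γ] V :=
  linearEquivOfSingle
    { toFun := fun f => f default
      invFun := fun v _ => v
      left_inv := fun f => funext fun x => congrArg f (Subsingleton.elim _ _)
      map_add' := fun _ _ => rfl } fun g r f => by
    refine (single_smul_apply g r f default).trans ?_
    rw [Subsingleton.elim (g⁻¹ • default : X) default]
    rfl

variable (k V) in
/-- Pullback of functions along a map of `Γ`-sets. -/
noncomputable def comap (u : Y →[Γ] X) : TwistedFun X V →ₗ[MonoidAlgebra k Γ] TwistedFun Y V where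
  toFun f y := f (u y)
  map_add' _ _ := rfl
  map_smul' := map_smul_of_forall_single (M := TwistedFun X V) (N := TwistedFun Y V)
    { toFun := fun f y => f (u y)
      map_zero' := rfl
      map_add' := fun _ _ => rfl } fun g r f => by
    funext y
    rw [single_smul_apply]
    refine (single_smul_apply g r f (u y)).trans ?_
    rw [← map_smul]
    rfl

variable (k V) in
/-- A decomposition of `X` into a family of `Γ`-sets turns `k[X] ⊗ V` into a product. -/
noncomputable def sigmaEquiv {ι : Type*} {S : ι → Type*} [∀ i, MulAction Γ (S i)]
    (u : ∀ i, S i →[Γ] X) (hu : Function.Bijective fun z : Σ i, S i => u z.1 z.2) :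
    TwistedFun X V ≃ₗ[MonoidAlgebra k Γ] ∀ i, TwistedFun (S i) V :=
  LinearEquiv.ofBijective (LinearMap.pi fun i => comap k V (u i)) <| by
    let e := Equiv.ofBijective _ hu
    refine ⟨fun f f' h => funext fun x => ?_, fun f => ?_⟩
    · obtain ⟨⟨i, s⟩, rfl⟩ := hu.2 x
      exact congrFun (congrFun h i) s
    · refine ⟨fun x => f (e.symm x).1 (e.symm x).2, funext fun i => funext fun s => ?_⟩
      change f (e.symm (e ⟨i, s⟩)).1 (e.symm (e ⟨i, s⟩)).2 = f i s
      rw [e.symm_apply_apply]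

variable (k V) in
/-- A stable subset and its complement split `k[X] ⊗ V` as a product. -/
noncomputable def complEquiv (S : SubMulAction Γ X) :
    TwistedFun X V ≃ₗ[MonoidAlgebra k Γ]
      TwistedFun (Sᶜ : SubMulAction Γ X) V × TwistedFun S V :=
  LinearEquiv.ofBijective ((comap k V (Sᶜ).subtype).prod (comap k V S.subtype)) <| by
    classical
    refine ⟨fun f f' h => funext fun x => ?_, fun f => ?_⟩
    · by_cases hx : x ∈ S
      · exact congrFun (congrArg Prod.snd h) ⟨x, hx⟩
      · exact congrFun (congrArg Prod.fst h) ⟨x, hx⟩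
    · exact ⟨fun x => if hx : x ∈ S then f.2 ⟨x, hx⟩ else f.1 ⟨x, hx⟩,
        Prod.ext (funext fun x => dif_neg x.2) (funext fun x => dif_pos x.2)⟩

end TwistedFun

end TwistedFun

/-! ### Induction on stabilizers -/

section Stabilizers

variable {Γ X Y : Type*} [Group Γ] [MulAction Γ X] [MulAction Γ Y]

theorem exists_mulActionHom_of_stabilizer_le [MulAction.IsPretransitive Γ X] {x : X} {y : Y}
    (h : MulAction.stabilizer Γ x ≤ MulAction.stabilizer Γ y) : ∃ u : X →[Γ] Y, u x = y := by
  have hcongr : ∀ a b : Γ, a • x = b • x → a • y = b • y := fun a b hab => by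
    have hmem : b⁻¹ * a ∈ MulAction.stabilizer Γ y := h (by
      rw [MulAction.mem_stabilizer_iff, mul_smul, hab, inv_smul_smul])
    rwa [MulAction.mem_stabilizer_iff, mul_smul, inv_smul_eq_iff] at hmem
  choose t ht using fun z => MulAction.exists_smul_eq Γ x z
  refine ⟨⟨fun z => t z • y, fun g z => ?_⟩, ?_⟩
  · rw [id_eq, smul_smul]
    exact hcongr _ _ (by rw [ht, mul_smul, ht])
  · exact (hcongr _ 1 (by rw [ht, one_smul])).trans (one_smul Γ y)

theorem mulActionHom_ext_of_isPretransitive [MulAction.IsPretransitive Γ X] {u v : X →[Γ] Y} {x : X}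
    (h : u x = v x) : u = v := by
  ext z
  obtain ⟨g, rfl⟩ := MulAction.exists_smul_eq Γ x z
  rw [map_smul, map_smul, h]

theorem stabilizer_le_stabilizer_map (u : X →[Γ] Y) (x : X) :
    MulAction.stabilizer Γ x ≤ MulAction.stabilizer Γ (u x) := fun g hg => by
  rw [MulAction.mem_stabilizer_iff, ← map_smul, MulAction.mem_stabilizer_iff.1 hg]

theorem card_mulActionHom_eq_card_fixedPoints [MulAction.IsPretransitive Γ X] (x : X) :
    Nat.card (X →[Γ] Y) = Nat.card (MulAction.fixedPoints (MulAction.stabilizer Γ x) Y) := by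
  refine Nat.card_eq_of_bijective
    (fun u => ⟨u x, fun g => stabilizer_le_stabilizer_map u x g.2⟩) ⟨fun u v h => ?_, fun y => ?_⟩
  · exact mulActionHom_ext_of_isPretransitive (congrArg Subtype.val h)
  · obtain ⟨u, hu⟩ := exists_mulActionHom_of_stabilizer_le (Γ := Γ) (x := x) (y := y.1)
      fun g hg => y.2 ⟨g, hg⟩
    exact ⟨u, Subtype.ext hu⟩

/-- The pairs `(y, x)` for which `y` is fixed by the stabilizer of `x`. For transitive `X` it is the
union of the graphs of the equivariant maps `X → Y`. -/
def stabilizerLE (Γ Y X : Type*) [Group Γ] [MulAction Γ Y] [MulAction Γ X] :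
    SubMulAction Γ (Y × X) where
  carrier := {z | MulAction.stabilizer Γ z.2 ≤ MulAction.stabilizer Γ z.1}
  smul_mem' g z hz := by
    simpa [MulAction.stabilizer_smul_eq_stabilizer_map_conj] using Subgroup.map_mono hz

/-- The graph of an equivariant map, parametrized by its source. -/
def graphHom (u : X →[Γ] Y) : X →[Γ] stabilizerLE Γ Y X where
  toFun x := ⟨(u x, x), stabilizer_le_stabilizer_map u x⟩
  map_smul' g x := Subtype.ext (Prod.ext (map_smul u g x) rfl)

theorem bijective_sigma_graphHom [MulAction.IsPretransitive Γ X] :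
    Function.Bijective fun z : Σ _ : X →[Γ] Y, X => graphHom z.1 z.2 := by
  refine ⟨?_, ?_⟩
  · rintro ⟨u, x⟩ ⟨v, x'⟩ h
    obtain rfl : x = x' := congrArg (fun z : stabilizerLE Γ Y X => z.1.2) h
    obtain rfl : u = v :=
      mulActionHom_ext_of_isPretransitive (congrArg (fun z : stabilizerLE Γ Y X => z.1.1) h)
    rfl
  · rintro ⟨⟨y, x⟩, hz⟩
    obtain ⟨u, hu⟩ := exists_mulActionHom_of_stabilizer_le hz
    exact ⟨⟨u, x⟩, Subtype.ext (Prod.ext hu rfl)⟩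

theorem card_stabilizer_lt_of_notMem_stabilizerLE [Finite Γ] {z : Y × X}
    (hz : z ∉ stabilizerLE Γ Y X) :
    Nat.card (MulAction.stabilizer Γ z) < Nat.card (MulAction.stabilizer Γ z.2) := by
  obtain ⟨g, hgx, hgy⟩ := SetLike.not_le_iff_exists.1
    (show ¬ MulAction.stabilizer Γ z.2 ≤ MulAction.stabilizer Γ z.1 from hz)
  exact Set.Finite.card_lt_card (Set.toFinite _)
    ⟨fun h hh => congrArg Prod.snd hh, fun h => hgy (congrArg Prod.fst (h hgx))⟩

theorem bijective_sigma_orbit : Function.Bijective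
    fun z : Σ ω : MulAction.orbitRel.Quotient Γ X, ω.orbit => (z.2 : X) :=
  (MulAction.selfEquivSigmaOrbits' Γ X).symm.bijective

theorem stabilizer_coe_orbit {ω : MulAction.orbitRel.Quotient Γ X} (x : ω.orbit) :
    MulAction.stabilizer Γ x = MulAction.stabilizer Γ (x : X) := by
  ext g
  exact Subtype.ext_iff

end Stabilizers

namespace HasPrimePowerLift

universe v

variable {A k Γ V : Type*} {X Y : Type v} [Ring A] [CommRing k] [Group Γ]
  {φ : A →+* MonoidAlgebra k Γ} {p : ℕ} [AddCommGroup V] [Module (MonoidAlgebra k Γ) V]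
  [MulAction Γ X] [MulAction Γ Y]

theorem twistedFun_of_orbits [Finite X]
    (h : ∀ ω : MulAction.orbitRel.Quotient Γ X, HasPrimePowerLift φ p (TwistedFun ω.orbit V)) :
    HasPrimePowerLift φ p (TwistedFun X V) :=
  let u (ω : MulAction.orbitRel.Quotient Γ X) : ω.orbit →[Γ] X := ⟨Subtype.val, fun _ _ => rfl⟩
  (HasPrimePowerLift.pi h).congr (TwistedFun.sigmaEquiv k V u bijective_sigma_orbit).symm

theorem twistedFun_of_stabilizerLE_compl (hJ : RingHom.ker φ ≤ Ring.jacobson A)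
    [Finite X] [Finite Y] [MulAction.IsPretransitive Γ X] {a : ℕ}
    (ha : Nat.card (X →[Γ] Y) = p ^ a) (h : HasPrimePowerLift φ p (TwistedFun (Y × X) V))
    (hcompl : HasPrimePowerLift φ p (TwistedFun ((stabilizerLE Γ Y X)ᶜ : SubMulAction Γ _) V)) :
    HasPrimePowerLift φ p (TwistedFun X V) := by
  have := FunLike.finite (X →[Γ] Y)
  have hle : HasPrimePowerLift φ p (TwistedFun (stabilizerLE Γ Y X) V) :=
    (h.congr (TwistedFun.complEquiv k V _)).cancel hJ hcompl
  exact (hle.congr (TwistedFun.sigmaEquiv k V graphHom bijective_sigma_graphHom)).of_pi ha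

variable [Finite Γ] [Finite Y]

theorem twistedFun_of_card_stabilizer (hJ : RingHom.ker φ ≤ Ring.jacobson A)
    (hY : ∀ K : Subgroup Γ, ∃ a, Nat.card (MulAction.fixedPoints K Y) = p ^ a)
    (h : ∀ (X : Type v) [Finite X] [MulAction Γ X], HasPrimePowerLift φ p (TwistedFun (Y × X) V))
    (n : ℕ) (X : Type v) [Finite X] [MulAction Γ X] [MulAction.IsPretransitive Γ X] (x : X)
    (hn : Nat.card (MulAction.stabilizer Γ x) = n) : HasPrimePowerLift φ p (TwistedFun X V) := by
  induction n using Nat.strong_induction_on generalizing X with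
  | _ n ih =>
    obtain ⟨a, ha⟩ := hY (MulAction.stabilizer Γ x)
    rw [← card_mulActionHom_eq_card_fixedPoints] at ha
    refine twistedFun_of_stabilizerLE_compl hJ ha (h X) (twistedFun_of_orbits fun ω => ?_)
    obtain ⟨z, hz⟩ := ω.nonempty_orbit
    refine ih _ ?_ ω.orbit ⟨z, hz⟩ rfl
    obtain ⟨g, hg⟩ := MulAction.exists_smul_eq Γ x z.1.2
    rw [stabilizer_coe_orbit, SubMulAction.stabilizer_of_subMul, ← hn]
    refine (card_stabilizer_lt_of_notMem_stabilizerLE z.2).trans_eq ?_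
    rw [← hg]
    exact Nat.card_congr (MulAction.stabilizerEquivStabilizer rfl).symm.toEquiv

theorem of_twistedFun_prod (hJ : RingHom.ker φ ≤ Ring.jacobson A)
    (hY : ∀ K : Subgroup Γ, ∃ a, Nat.card (MulAction.fixedPoints K Y) = p ^ a)
    (h : ∀ (X : Type v) [Finite X] [MulAction Γ X], HasPrimePowerLift φ p (TwistedFun (Y × X) V)) :
    HasPrimePowerLift φ p V :=
  (twistedFun_of_card_stabilizer hJ hY h _ PUnit PUnit.unit rfl).congr
    (TwistedFun.uniqueEquiv k Γ PUnit V)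

end HasPrimePowerLift

/-! ### Induced modules -/

namespace TwistedFun

variable {k G X V F : Type*} [CommRing k] [Group G] [AddCommGroup V] [AddCommGroup F]
  [Module (MonoidAlgebra k G) V] [Module (MonoidAlgebra k G) F]

/-- The function with value `v` at `x` and `0` elsewhere; the tensor `x ⊗ v` in `k[X] ⊗ V`. -/
def single [DecidableEq X] (x : X) : V →+ TwistedFun X V :=
  AddMonoidHom.single (fun _ : X => V) x

theorem single_smul_single [DecidableEq X] [MulAction G X] (g : G) (r : k) (x : X) (v : V) :
    MonoidAlgebra.single g r • single x v = single (g • x) (MonoidAlgebra.single g r • v) := by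
  funext y
  rw [single_smul_apply]
  change MonoidAlgebra.single g r • (Pi.single x v : X → V) (g⁻¹ • y) =
    (Pi.single (g • x) (MonoidAlgebra.single g r • v) : X → V) y
  rw [Pi.single_apply, Pi.single_apply, smul_ite, smul_zero]
  simp only [inv_smul_eq_iff]

variable (L : Subgroup G)

theorem linearMap_ext_single_one [Finite (G ⧸ L)] [DecidableEq (G ⧸ L)]
    {T T' : TwistedFun (G ⧸ L) V →ₗ[MonoidAlgebra k G] F}
    (h : ∀ v, T (single ((1 : G) : G ⧸ L) v) = T' (single ((1 : G) : G ⧸ L) v)) : T = T' := by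
  have hsingle (x : G ⧸ L) (v : V) : T (single x v) = T' (single x v) := by
    obtain ⟨g, rfl⟩ := QuotientGroup.mk_surjective x
    have hg : single (g : G ⧸ L) v = MonoidAlgebra.of k G g •
        single ((1 : G) : G ⧸ L) (MonoidAlgebra.of k G g⁻¹ • v) := by
      rw [MonoidAlgebra.of_apply, single_smul_single, ← MonoidAlgebra.of_apply, smul_smul,
        ← map_mul, mul_inv_cancel, map_one, one_smul, MulAction.Quotient.smul_coe, smul_eq_mul,
        mul_one]
    rw [hg, LinearMap.map_smul, LinearMap.map_smul, h]
  have hT : T.toAddMonoidHom = T'.toAddMonoidHom :=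
    AddMonoidHom.functions_ext F _ _ hsingle
  exact LinearMap.ext fun f => DFunLike.congr_fun hT f

variable {L} [Module (MonoidAlgebra k L) V]

theorem map_single_smul_of_mem
    (hV : ∀ (b : MonoidAlgebra k L) (v : V),
      b • v = MonoidAlgebra.mapDomainRingHom k L.subtype b • v)
    (t : V →ₛₗ[MonoidAlgebra.mapDomainRingHom k L.subtype] F) {l : G} (hl : l ∈ L) (r : k)
    (v : V) : t (MonoidAlgebra.single l r • v) = MonoidAlgebra.single l r • t v := by
  have hsingle : MonoidAlgebra.mapDomainRingHom k L.subtype (MonoidAlgebra.single ⟨l, hl⟩ r) =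
      MonoidAlgebra.single l r := by simp
  rw [← hsingle, ← hV, map_smulₛₗ]

theorem smul_map_inv_smul_eq_of_coe_eq
    (hV : ∀ (b : MonoidAlgebra k L) (v : V),
      b • v = MonoidAlgebra.mapDomainRingHom k L.subtype b • v)
    (t : V →ₛₗ[MonoidAlgebra.mapDomainRingHom k L.subtype] F) {g g' : G}
    (h : (g : G ⧸ L) = g') (v : V) :
    MonoidAlgebra.of k G g • t (MonoidAlgebra.of k G g⁻¹ • v) =
      MonoidAlgebra.of k G g' • t (MonoidAlgebra.of k G g'⁻¹ • v) := by
  have hmem : g'⁻¹ * g ∈ L := QuotientGroup.eq.1 h.symm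
  calc MonoidAlgebra.of k G g • t (MonoidAlgebra.of k G g⁻¹ • v)
      = MonoidAlgebra.of k G g' • MonoidAlgebra.of k G (g'⁻¹ * g) •
          t (MonoidAlgebra.of k G g⁻¹ • v) := by
        rw [smul_smul, ← map_mul, mul_inv_cancel_left]
    _ = MonoidAlgebra.of k G g' • t (MonoidAlgebra.of k G (g'⁻¹ * g) •
          MonoidAlgebra.of k G g⁻¹ • v) := by
        rw [MonoidAlgebra.of_apply k G (g'⁻¹ * g), map_single_smul_of_mem hV t hmem]
    _ = MonoidAlgebra.of k G g' • t (MonoidAlgebra.of k G g'⁻¹ • v) := by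
        rw [smul_smul, ← map_mul, mul_inv_cancel_right]

theorem smul_map_inv_smul_single_smul
    (hV : ∀ (b : MonoidAlgebra k L) (v : V),
      b • v = MonoidAlgebra.mapDomainRingHom k L.subtype b • v)
    (t : V →ₛₗ[MonoidAlgebra.mapDomainRingHom k L.subtype] F) (g h : G) (r : k) (v : V) :
    MonoidAlgebra.of k G (g * h) •
        t (MonoidAlgebra.of k G (g * h)⁻¹ • MonoidAlgebra.single g r • v) =
      MonoidAlgebra.single g r • MonoidAlgebra.of k G h • t (MonoidAlgebra.of k G h⁻¹ • v) := by
  have hscalar : t (MonoidAlgebra.single h⁻¹ r • v) =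
      MonoidAlgebra.single (1 : G) r • t (MonoidAlgebra.of k G h⁻¹ • v) := by
    rw [← map_single_smul_of_mem hV t L.one_mem, smul_smul, MonoidAlgebra.of_apply,
      MonoidAlgebra.single_mul_single, one_mul, mul_one]
  have hsingle : MonoidAlgebra.of k G (g * h)⁻¹ * MonoidAlgebra.single g r =
      MonoidAlgebra.single h⁻¹ r := by simp
  rw [smul_smul, hsingle, hscalar, smul_smul, smul_smul]
  simp

-- Frobenius reciprocity: on the component at `gL` the extension of `t` is `g ∘ t ∘ g⁻¹`.
theorem exists_linearMap_single_one [Finite (G ⧸ L)] [DecidableEq (G ⧸ L)]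
    (hV : ∀ (b : MonoidAlgebra k L) (v : V),
      b • v = MonoidAlgebra.mapDomainRingHom k L.subtype b • v)
    (t : V →ₛₗ[MonoidAlgebra.mapDomainRingHom k L.subtype] F) :
    ∃ T : TwistedFun (G ⧸ L) V →ₗ[MonoidAlgebra k G] F,
      ∀ v, T (single ((1 : G) : G ⧸ L) v) = t v := by
  have := Fintype.ofFinite (G ⧸ L)
  let component (x : G ⧸ L) : V →+ F :=
    AddMonoidHom.mk' (fun v => MonoidAlgebra.of k G x.out • t (MonoidAlgebra.of k G x.out⁻¹ • v))
      fun v w => by rw [smul_add, map_add, smul_add]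
  have component_coe (g : G) (v : V) : component g v =
      MonoidAlgebra.of k G g • t (MonoidAlgebra.of k G g⁻¹ • v) :=
    smul_map_inv_smul_eq_of_coe_eq hV t (QuotientGroup.out_eq' _) v
  have component_smul (g : G) (r : k) (x : G ⧸ L) (v : V) :
      component (g • x) (MonoidAlgebra.single g r • v) =
        MonoidAlgebra.single g r • component x v := by
    obtain ⟨h, rfl⟩ := QuotientGroup.mk_surjective x
    rw [MulAction.Quotient.smul_coe, smul_eq_mul, component_coe, component_coe,
      smul_map_inv_smul_single_smul hV]
  let T : TwistedFun (G ⧸ L) V →+ F :=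
    AddMonoidHom.mk' (fun f => ∑ x, component x (f x)) fun f f' => by
      rw [← Finset.sum_add_distrib]
      exact Finset.sum_congr rfl fun x _ => map_add (component x) (f x) (f' x)
  refine ⟨{ T with map_smul' := map_smul_of_forall_single T fun g r f => ?_ }, fun v => ?_⟩
  · change ∑ x, component x ((MonoidAlgebra.single g r • f) x) =
      MonoidAlgebra.single g r • ∑ x, component x (f x)
    rw [Finset.smul_sum]
    refine (Fintype.sum_equiv (MulAction.toPerm g) _ _ fun x => ?_).symm
    rw [MulAction.toPerm_apply, single_smul_apply, inv_smul_smul, component_smul]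
  · change ∑ x, component x ((Pi.single ((1 : G) : G ⧸ L) v : G ⧸ L → V) x) = t v
    rw [Fintype.sum_eq_single ((1 : G) : G ⧸ L) fun x hx => by rw [Pi.single_eq_of_ne hx, map_zero],
      Pi.single_eq_same, component_coe, inv_one, map_one, one_smul, one_smul]

theorem projective_quotient [Finite (G ⧸ L)] [Module.Projective (MonoidAlgebra k L) V]
    (hV : ∀ (b : MonoidAlgebra k L) (v : V),
      b • v = MonoidAlgebra.mapDomainRingHom k L.subtype b • v) :
    Module.Projective (MonoidAlgebra k G) (TwistedFun (G ⧸ L) V) := by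
  classical
  refine Module.Projective.of_lifting_property'' fun q hq => ?_
  let δ : V →ₛₗ[MonoidAlgebra.mapDomainRingHom k L.subtype] TwistedFun (G ⧸ L) V :=
    { single ((1 : G) : G ⧸ L) with
      map_smul' := fun b v => by
        change single ((1 : G) : G ⧸ L) (b • v) = _ • single ((1 : G) : G ⧸ L) v
        induction b using MonoidAlgebra.induction_linear with
        | zero => simp
        | add a b ha hb => rw [add_smul, map_add, ha, hb, map_add, add_smul]
        | single l r =>
          have hl : (l : G) • ((1 : G) : G ⧸ L) = (1 : G) :=
            QuotientGroup.eq.2 (by simp)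
          rw [hV, MonoidAlgebra.mapDomainRingHom_apply, MonoidAlgebra.mapDomain_single,
            Subgroup.subtype_apply, single_smul_single, hl] }
  obtain ⟨t, ht⟩ := exists_semilinear_lift (φ := MonoidAlgebra.mapDomainRingHom k L.subtype) q hq δ
  obtain ⟨T, hT⟩ := exists_linearMap_single_one hV t
  exact ⟨T, linearMap_ext_single_one L fun v =>
    (congrArg q (hT v)).trans (LinearMap.congr_fun ht v)⟩

end TwistedFun

/-! ### Composition factors -/

namespace SameCompositionFactors

theorem refl (R X : Type*) [Ring R] [AddCommGroup X] [Module R X] [IsNoetherian R X]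
    [IsArtinian R X] : SameCompositionFactors R X X := by
  obtain ⟨s, hbot, htop⟩ := exists_compositionSeries_of_isNoetherian_isArtinian R X
  have hmono : Monotone s.toFun := s.strictMono.monotone
  exact ⟨s.length, s.toFun, s.toFun, Equiv.refl _, hmono, hmono, hbot, htop, hbot, htop, fun i =>
    ⟨(covBy_iff_quot_is_simple (hmono Fin.castSucc_lt_succ.le)).1 (s.step i),
      ⟨LinearEquiv.refl _ _⟩⟩⟩

variable {B D X Y : Type*} [Ring B] [IsSemisimpleRing B] [Ring D] [Module B D]
  [AddCommGroup X] [Module D X] [Module B X] [IsScalarTower B D X]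
  [AddCommGroup Y] [Module D Y] [Module B Y] [IsScalarTower B D Y]

variable (B) in
theorem nonempty_prod_quotient_linearEquiv {a b : Submodule D X} (hab : a ≤ b) :
    Nonempty ((a × (b ⧸ a.comap b.subtype)) ≃ₗ[B] b) := by
  let N : Submodule B b := (a.comap b.subtype).restrictScalars B
  obtain ⟨C, hC⟩ := exists_isCompl N
  let eN : a ≃ₗ[B] N := (Submodule.comapSubtypeEquivOfLe hab).symm.restrictScalars B
  let eC : (b ⧸ a.comap b.subtype) ≃ₗ[B] C :=
    (Submodule.quotEquivOfEq N N rfl).trans (Submodule.quotientEquivOfIsCompl N C hC)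
  exact ⟨(eN.prodCongr eC).trans (Submodule.prodEquivOfIsCompl N C hC)⟩

variable (B) in
theorem nonempty_prod_pi_quotient_linearEquiv {n : ℕ} {c : Fin (n + 1) → Submodule D X}
    (hc : Monotone c) :
    Nonempty ((c 0 × ∀ j : Fin n, c j.succ ⧸ (c j.castSucc).comap (c j.succ).subtype) ≃ₗ[B]
      c (Fin.last n)) := by
  induction n with
  | zero => exact ⟨LinearEquiv.prodUnique⟩
  | succ n ih =>
    obtain ⟨e⟩ := ih (c := fun j => c j.succ) (hc.comp (Fin.strictMono_succ).monotone)
    obtain ⟨e₀⟩ := nonempty_prod_quotient_linearEquiv B (hc (Fin.zero_le 1))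
    let cons := Fin.consLinearEquiv B
      fun j : Fin (n + 1) => c j.succ ⧸ (c j.castSucc).comap (c j.succ).subtype
    exact ⟨((LinearEquiv.refl B (c 0)).prodCongr cons.symm).trans
      (((LinearEquiv.prodAssoc B _ _ _).symm.trans (e₀.prodCongr (.refl B _))).trans e)⟩

variable (B) in
theorem nonempty_pi_quotient_linearEquiv {n : ℕ} {c : Fin (n + 1) → Submodule D X}
    (hc : Monotone c) (hbot : c 0 = ⊥) (htop : c (Fin.last n) = ⊤) :
    Nonempty ((∀ j : Fin n, c j.succ ⧸ (c j.castSucc).comap (c j.succ).subtype) ≃ₗ[B] X) := by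
  obtain ⟨e⟩ := nonempty_prod_pi_quotient_linearEquiv B hc
  have : Unique (c 0) := hbot ▸ inferInstance
  exact ⟨LinearEquiv.uniqueProd.symm.trans
    (e.trans ((LinearEquiv.ofTop _ htop).restrictScalars B))⟩

variable (B) in
theorem nonempty_linearEquiv (h : SameCompositionFactors D X Y) : Nonempty (X ≃ₗ[B] Y) := by
  obtain ⟨n, c, d, σ, hc, hd, hc₀, hc₁, hd₀, hd₁, h⟩ := h
  obtain ⟨eX⟩ := nonempty_pi_quotient_linearEquiv B hc hc₀ hc₁
  obtain ⟨eY⟩ := nonempty_pi_quotient_linearEquiv B hd hd₀ hd₁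
  let matchFactors := LinearEquiv.piCongrRight fun i => (h i).2.some.restrictScalars B
  let permute := LinearEquiv.piCongrLeft B
    (fun j : Fin n => d j.succ ⧸ (d j.castSucc).comap (d j.succ).subtype) σ
  exact ⟨((eX.symm.trans matchFactors).trans permute).trans eY⟩

end SameCompositionFactors

/-! ### Lattices over `ℤ_(p)G` -/

section Lattice

variable {R A M : Type*} [CommRing R] [Ring A] [Algebra R A] [AddCommGroup M] [Module R M]
  [Module A M] [IsScalarTower R A M]

variable (R A) in
theorem projective_of_free_of_projective [Module.Free R A] [Module.Projective A M] :
    Module.Projective R M := by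
  obtain ⟨s, hs⟩ := Module.projective_def'.1 ‹Module.Projective A M›
  exact .of_split (s.restrictScalars R)
    ((Finsupp.linearCombination A (id : M → M)).restrictScalars R)
    (LinearMap.ext fun x => LinearMap.congr_fun hs x)

open scoped Pointwise in
theorem mem_span_algebraMap_smul_top_iff {r : R} {m : M} :
    m ∈ Ideal.span {algebraMap R A r} • (⊤ : Submodule A M) ↔
      m ∈ Ideal.span {r} • (⊤ : Submodule R M) := by
  have := IsScalarTower.to_smulCommClass (R := R) (A := A) (M := M)
  rw [Submodule.ideal_span_singleton_smul, Submodule.mem_smul_pointwise_iff_exists]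
  constructor
  · intro hm
    suffices h : m ∈ r • (⊤ : Submodule A M) by
      simpa [Submodule.mem_smul_pointwise_iff_exists] using h
    refine Submodule.smul_le.2 (fun a ha y _ => ?_) hm
    obtain ⟨b, rfl⟩ := Ideal.mem_span_singleton'.1 ha
    rw [mul_smul, algebraMap_smul, smul_comm]
    exact Submodule.smul_mem_pointwise_smul _ r _ Submodule.mem_top
  · rintro ⟨y, -, rfl⟩
    rw [← algebraMap_smul A]
    exact Submodule.smul_mem_smul (Ideal.mem_span_singleton_self _) Submodule.mem_top

theorem projective_monoidAlgebra_of_isUnit_card {H : Type*} [Group H] [Finite H]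
    [Module (MonoidAlgebra R H) M] [IsScalarTower R (MonoidAlgebra R H) M]
    (hH : IsUnit (Nat.card H : R)) [Module.Projective R M] :
    Module.Projective (MonoidAlgebra R H) M := by
  have := Fintype.ofFinite H
  refine Module.Projective.of_lifting_property'' fun q hq => ?_
  obtain ⟨s, hs⟩ := Module.projective_lifting_property (q.restrictScalars R) LinearMap.id hq
  have hs' (v : M) : q (s v) = v := LinearMap.congr_fun hs v
  refine ⟨s.equivariantProjection H, LinearMap.ext fun v => ?_⟩
  let one : M →ₗ[R] M := LinearMap.id
  have hconj (g : H) : q (s.conjugate g v) = one.conjugate g v := by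
    rw [LinearMap.conjugate_apply, LinearMap.conjugate_apply, map_smul, hs', LinearMap.id_apply]
  calc q (s.equivariantProjection H v)
      = Ring.inverse (Nat.card H : R) • ∑ g : H, one.conjugate g v := by
        rw [LinearMap.equivariantProjection_apply, ← q.restrictScalars_apply R, map_smul, map_sum]
        simp only [LinearMap.restrictScalars_apply, hconj]
    _ = v := by
        rw [← LinearMap.equivariantProjection_apply]
        exact LinearMap.equivariantProjection_condition H one LinearMap.id hH
          (fun _ => rfl) v

end Lattice

section Witness

variable {p : ℕ} [Fact p.Prime]

theorem isUnit_natCast_zloc {n : ℕ} (hn : ¬ p ∣ n) : IsUnit (n : ZLoc p) := by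
  have hmem : (n : ℤ) ∈ (Ideal.span {(p : ℤ)}).primeCompl := fun h =>
    hn (Int.natCast_dvd_natCast.1 (Ideal.mem_span_singleton.1 h))
  simpa using IsLocalization.map_units (ZLoc p) ⟨(n : ℤ), hmem⟩

theorem mem_ker_groupRingToFp_smul_top_iff {G M : Type*} [Group G] [AddCommGroup M]
    [Module (ZLoc p) M] [Module (MonoidAlgebra (ZLoc p) G) M]
    [IsScalarTower (ZLoc p) (MonoidAlgebra (ZLoc p) G) M] {m : M} :
    m ∈ RingHom.ker (groupRingToFp p G) • (⊤ : Submodule (MonoidAlgebra (ZLoc p) G) M) ↔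
      m ∈ Ideal.span {(p : ZLoc p)} • (⊤ : Submodule (ZLoc p) M) := by
  rw [ker_groupRingToFp, ← map_natCast (algebraMap (ZLoc p) (MonoidAlgebra (ZLoc p) G)),
    mem_span_algebraMap_smul_top_iff]

variable {G H : Type} [Group G] [Finite G] [Group H] [Finite H]

theorem hasProjectiveLift_restrict (hH : ¬ p ∣ Nat.card H) (ι : H →* G)
    {M X : Type} [AddCommGroup M] [Module (ZLoc p) M] [Module (MonoidAlgebra (ZLoc p) G) M]
    [IsScalarTower (ZLoc p) (MonoidAlgebra (ZLoc p) G) M]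
    [Module.Finite (MonoidAlgebra (ZLoc p) G) M] [Module.Projective (ZLoc p) M]
    [AddCommGroup X] [Module (MonoidAlgebra (ZMod p) G) X] [Module (MonoidAlgebra (ZMod p) H) X]
    (hX : ∀ (b : MonoidAlgebra (ZMod p) H) (x : X),
      b • x = MonoidAlgebra.mapDomainRingHom (ZMod p) ι b • x)
    {f : M →ₛₗ[groupRingToFp p G] X} (hf : IsReduction f) :
    HasProjectiveLift (groupRingToFp p H) X := by
  let ρ := MonoidAlgebra.mapDomainRingHom (ZLoc p) ι
  let _ : Module (MonoidAlgebra (ZLoc p) H) M := Module.compHom M ρ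
  have : IsScalarTower (ZLoc p) (MonoidAlgebra (ZLoc p) H) M := ⟨fun r b x => by
    change ρ (r • b) • x = r • ρ b • x
    rw [← smul_assoc]
    simp [ρ]⟩
  have := finite_monoidAlgebra (R := ZLoc p) (G := G)
  have : Module.Finite (ZLoc p) M := .trans (MonoidAlgebra (ZLoc p) G) M
  have : Module.Finite (MonoidAlgebra (ZLoc p) H) M := .of_restrictScalars_finite (ZLoc p) _ _
  let fH : M →ₛₗ[groupRingToFp p H] X :=
    { toFun := f
      map_add' := map_add f
      map_smul' := fun b m => by
        rw [hX, ← RingHom.comp_apply, ← groupRingToFp_comp_mapDomainRingHom]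
        exact map_smulₛₗ f (ρ b) m }
  exact ⟨M, _, _, this, projective_monoidAlgebra_of_isUnit_card (isUnit_natCast_zloc hH), fH, hf.1,
    fun m hm => mem_ker_groupRingToFp_smul_top_iff.2
      (mem_ker_groupRingToFp_smul_top_iff.1 (hf.2 hm))⟩

theorem ReductionWitness.hasProjectiveLift (hH : ¬ p ∣ Nat.card H) (ι : H →* G)
    {Q : Type} [AddCommGroup Q] [Module (MonoidAlgebra (ZMod p) G) Q]
    [Module (MonoidAlgebra (ZMod p) H) Q]
    (hQ : ∀ (b : MonoidAlgebra (ZMod p) H) (q : Q),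
      b • q = MonoidAlgebra.mapDomainRingHom (ZMod p) ι b • q)
    (w : ReductionWitness p G Q) : HasProjectiveLift (groupRingToFp p H) Q := by
  have := isSemisimpleRing_monoidAlgebra_zmod hH
  obtain ⟨M, _, _, X, f, hsurj, hker, same⟩ := w
  let ρ := MonoidAlgebra.mapDomainRingHom (ZMod p) ι
  let _ : Module (MonoidAlgebra (ZMod p) H) (MonoidAlgebra (ZMod p) G) := Module.compHom _ ρ
  let _ : Module (MonoidAlgebra (ZMod p) H) X := Module.compHom _ ρ
  have : IsScalarTower (MonoidAlgebra (ZMod p) H) (MonoidAlgebra (ZMod p) G) X :=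
    ⟨fun b d x => mul_smul (ρ b) d x⟩
  have : IsScalarTower (MonoidAlgebra (ZMod p) H) (MonoidAlgebra (ZMod p) G) Q :=
    ⟨fun b d q => (mul_smul (ρ b) d q).trans (hQ b _).symm⟩
  obtain ⟨e⟩ := same.nonempty_linearEquiv (MonoidAlgebra (ZMod p) H)
  have hf : IsReduction f := ⟨hsurj, fun m hm =>
    mem_ker_groupRingToFp_smul_top_iff.2 ((hker m).1 hm)⟩
  exact (hasProjectiveLift_restrict hH ι (fun _ _ => rfl) hf).congr e

theorem HasProjectiveLift.nonempty_reductionWitness {Q : Type} [AddCommGroup Q]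
    [Module (MonoidAlgebra (ZMod p) G) Q] [Module.Finite (MonoidAlgebra (ZMod p) G) Q]
    (h : HasProjectiveLift (groupRingToFp p G) Q) : Nonempty (ReductionWitness p G Q) := by
  obtain ⟨M, _, _, _, _, f, hf⟩ := h
  let _ : Module (ZLoc p) M := Module.compHom M (algebraMap (ZLoc p) (MonoidAlgebra (ZLoc p) G))
  have : IsScalarTower (ZLoc p) (MonoidAlgebra (ZLoc p) G) M := ⟨fun r a m => by
    rw [Algebra.smul_def, mul_smul]
    rfl⟩
  have := finite_monoidAlgebra (R := ZMod p) (G := G)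
  have : Finite (MonoidAlgebra (ZMod p) G) := Module.finite_of_finite (ZMod p)
  have : Finite Q := Module.finite_of_finite (MonoidAlgebra (ZMod p) G)
  exact ⟨{ M, X := Q, f, finite := ‹_›, surjective := hf.1
           projectiveLoc := projective_of_free_of_projective (ZLoc p) (MonoidAlgebra (ZLoc p) G)
           ker_eq := fun m => by
             rw [← LinearMap.mem_ker, hf.ker_eq, mem_ker_groupRingToFp_smul_top_iff]
           same := .refl _ _ }⟩

theorem nonempty_reductionWitness_of_liftsIdempotents (hH : ¬ p ∣ Nat.card H) {π : G →* H}
    {ι : H →* G} (hι : Function.LeftInverse π ι) (hπ : IsPGroup p π.ker)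
    (h : LiftsIdempotents ((MonoidAlgebra.mapDomainRingHom (ZMod p) π).comp (groupRingToFp p G)))
    (Q : Type) [AddCommGroup Q] [Module (MonoidAlgebra (ZMod p) G) Q]
    [Module.Finite (MonoidAlgebra (ZMod p) G) Q] [Module.Projective (MonoidAlgebra (ZMod p) G) Q] :
    Nonempty (ReductionWitness p G Q) := by
  have := isSemisimpleRing_monoidAlgebra_zmod hH
  have hψ := (mapDomainRingHom_leftInverse (R := ZMod p) hι).surjective
  have : RingHomSurjective (MonoidAlgebra.mapDomainRingHom (ZMod p) π) := ⟨hψ⟩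
  obtain ⟨V, _, _, g, hg⟩ := exists_isReduction hψ Q
  have : Module.Finite (MonoidAlgebra (ZMod p) H) V := .of_surjective g hg.1
  have hV := h.hasProjectiveLift (mapDomainRingHom_comp_groupRingToFp_surjective hι) V
  have hJ := ker_mapDomainRingHom_le_jacobson (R := ZMod p) hπ
  have hQ := HasProjectiveLift.of_comp (groupRingToFp_surjective (G := G)) hJ hg hV
  exact hQ.nonempty_reductionWitness

end Witness

/-! ### Semidirect products -/

section Semidirect

variable {p : ℕ} [Fact p.Prime]

theorem exists_leftInverse_subtype_of_normal {G : Type*} [Group G] {P H : Subgroup G}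
    (hP : P.Normal) (hmeet : P ⊓ H = ⊥) (hjoin : P ⊔ H = ⊤) :
    ∃ π : G →* H, Function.LeftInverse π H.subtype ∧ π.ker = P := by
  have hcompl : H.IsComplement' P := .symm <| Subgroup.isComplement'_of_disjoint_and_mul_eq_univ
    (disjoint_iff.2 hmeet) (by rw [← Subgroup.normal_mul, hjoin, Subgroup.coe_top])
  refine ⟨hcompl.QuotientMulEquiv.toMonoidHom.comp (QuotientGroup.mk' P), fun h => ?_, ?_⟩
  · exact hcompl.QuotientMulEquiv.apply_symm_apply h
  · rw [MulEquiv.toMonoidHom_eq_coe, MonoidHom.ker_mulEquiv_comp, QuotientGroup.ker_mk']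

section FixedPoints

variable {G : Type*} [Group G] {H : Subgroup G} {π : G →* H}

theorem mk_mem_fixedPoints_iff_mem_centralizer (hι : Function.LeftInverse π H.subtype) {y : G}
    (hy : π y = 1) (K : Subgroup H) :
    (y : G ⧸ H) ∈ MulAction.fixedPoints K (G ⧸ H) ↔
      y ∈ Subgroup.centralizer (K.map H.subtype : Set G) := by
  have hfixed (k : K) : k • (y : G ⧸ H) = y ↔ (k : G) * y = y * k := by
    refine Iff.trans (b := y⁻¹ * (k * y) ∈ H) (eq_comm.trans QuotientGroup.eq) ⟨fun h => ?_, ?_⟩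
    · have hk : π (y⁻¹ * (k * y)) = (k : H) := by
        rw [map_mul, map_mul, map_inv, hy, show π (k : H) = (k : H) from hι k]
        simp
      have hself : π (y⁻¹ * (k * y)) = y⁻¹ * (k * y) := congrArg Subtype.val (hι ⟨_, h⟩)
      rw [← hk, hself, mul_inv_cancel_left, ← hself, hk]
    · intro h
      rw [h, inv_mul_cancel_left]
      exact (k : H).2
  simp [Subgroup.mem_centralizer_iff, MulAction.mem_fixedPoints, hfixed]

theorem exists_card_fixedPoints_quotient_eq_pow [Finite G]
    (hι : Function.LeftInverse π H.subtype) (hπ : IsPGroup p π.ker) (K : Subgroup H) :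
    ∃ a, Nat.card (MulAction.fixedPoints K (G ⧸ H)) = p ^ a := by
  let C : Subgroup G := π.ker ⊓ Subgroup.centralizer (K.map H.subtype)
  let toFixed (y : C) : MulAction.fixedPoints K (G ⧸ H) :=
    ⟨(y : G), (mk_mem_fixedPoints_iff_mem_centralizer hι y.2.1 K).2 y.2.2⟩
  have hbij : Function.Bijective toFixed := by
    refine ⟨fun y z hyz => Subtype.ext ?_, ?_⟩
    · have hmem : (y : G)⁻¹ * z ∈ H := QuotientGroup.eq.1 (congrArg Subtype.val hyz)
      have hker : π ((y : G)⁻¹ * z) = 1 := π.ker.mul_mem (π.ker.inv_mem y.2.1) z.2.1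
      have hself : (π ((y : G)⁻¹ * z) : G) = (y : G)⁻¹ * z := congrArg Subtype.val (hι ⟨_, hmem⟩)
      exact inv_mul_eq_one.1 (by rw [← hself, hker, Subgroup.coe_one])
    · rintro ⟨x, hx⟩
      obtain ⟨g, rfl⟩ := QuotientGroup.mk_surjective x
      let y : G := g * (π g : G)⁻¹
      have hyg : (y : G ⧸ H) = g := QuotientGroup.eq.2 (by simp [y])
      have hπy : π y = 1 := by
        rw [map_mul, map_inv, show π (π g : G) = π g from hι (π g), mul_inv_cancel]
      exact ⟨⟨y, hπy, (mk_mem_fixedPoints_iff_mem_centralizer hι hπy K).1 (hyg ▸ hx)⟩,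
        Subtype.ext hyg⟩
  obtain ⟨a, ha⟩ := IsPGroup.iff_card.1 (hπ.to_le (inf_le_left : C ≤ π.ker))
  exact ⟨a, (Nat.card_eq_of_bijective toFixed hbij).symm.trans ha⟩

end FixedPoints

variable {G : Type} [Group G] [Finite G] {H : Subgroup G} {π : G →* H}

theorem hasProjectiveLift_twistedFun_quotient (hH : ¬ p ∣ Nat.card H)
    (hι : Function.LeftInverse π H.subtype)
    (h : ∀ (Q : Type) [AddCommGroup Q] [Module (MonoidAlgebra (ZMod p) G) Q],
      Module.Finite (MonoidAlgebra (ZMod p) G) Q → Module.Projective (MonoidAlgebra (ZMod p) G) Q →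
      Nonempty (ReductionWitness p G Q))
    (V : Type) [AddCommGroup V] [Module (MonoidAlgebra (ZMod p) H) V] [Finite V] :
    HasProjectiveLift (groupRingToFp p H) (TwistedFun (G ⧸ H) V) := by
  have := isSemisimpleRing_monoidAlgebra_zmod hH
  have := Module.projective_of_isSemisimpleRing (MonoidAlgebra (ZMod p) H) V
  let _ : Module (MonoidAlgebra (ZMod p) G) V :=
    Module.compHom V (MonoidAlgebra.mapDomainRingHom (ZMod p) π)
  have hV (b : MonoidAlgebra (ZMod p) H) (v : V) :
      b • v = MonoidAlgebra.mapDomainRingHom (ZMod p) H.subtype b • v :=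
    (congrArg (· • v) (mapDomainRingHom_leftInverse hι b)).symm
  have hproj := TwistedFun.projective_quotient hV
  obtain ⟨w⟩ := h (TwistedFun (G ⧸ H) V) .of_finite hproj
  refine w.hasProjectiveLift hH H.subtype fun b f => ?_
  induction b using MonoidAlgebra.induction_linear with
  | zero => rw [map_zero, zero_smul, zero_smul]
  | add a b ha hb => rw [map_add, add_smul, add_smul, ha, hb]
  | single h r =>
    funext x
    rw [TwistedFun.single_smul_apply, hV, MonoidAlgebra.mapDomainRingHom_apply,
      MonoidAlgebra.mapDomain_single, TwistedFun.single_smul_apply]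
    rfl

theorem liftsIdempotents_of_forall_reductionWitness (hH : ¬ p ∣ Nat.card H)
    (hι : Function.LeftInverse π H.subtype) (hπ : IsPGroup p π.ker)
    (h : ∀ (Q : Type) [AddCommGroup Q] [Module (MonoidAlgebra (ZMod p) G) Q],
      Module.Finite (MonoidAlgebra (ZMod p) G) Q → Module.Projective (MonoidAlgebra (ZMod p) G) Q →
      Nonempty (ReductionWitness p G Q)) :
    LiftsIdempotents (groupRingToFp p H) := by
  have := finite_monoidAlgebra (R := ZMod p) (G := H)
  have : Finite (MonoidAlgebra (ZMod p) H) := Module.finite_of_finite (ZMod p)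
  refine liftsIdempotents_of_hasPrimePowerLift hH fun I =>
    .of_twistedFun_prod ker_groupRingToFp_le_jacobson
      (exists_card_fixedPoints_quotient_eq_pow hι hπ) fun X _ _ => ?_
  have hlift := hasProjectiveLift_twistedFun_quotient hH hι h (TwistedFun X I)
  exact (hlift.congr (TwistedFun.curryEquiv (ZMod p) H X (G ⧸ H) I).symm).hasPrimePowerLift

end Semidirect

/-- Suppose the finite group `G` is the semidirect product `G = P ⋊ H` of a normal Sylow
`p`-subgroup `P` and a subgroup `H` of order prime to `p`. Then the following are
equivalent: (1) `α(G⁺(ℚG)) ⊇ β(K⁺(𝔽_pG))`, i.e. every finitely generated projective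
`𝔽_pG`-module is, up to composition factors, the reduction mod `p` of a `ℤ_(p)G`-lattice;
(2) `ℤ_(p)G` is semiperfect; (3) `ℤ_(p)H` is semiperfect. -/
theorem isSemiperfectRing_iff_of_sylow_semidirect
    (p : ℕ) [Fact p.Prime] (G : Type) [Group G] [Finite G]
    (P H : Subgroup G) (hPnormal : P.Normal) (hP : IsPGroup p P)
    (hH : ¬ p ∣ Nat.card H) (hmeet : P ⊓ H = ⊥) (hjoin : P ⊔ H = ⊤) :
    ((∀ (Q : Type) [AddCommGroup Q] [Module (MonoidAlgebra (ZMod p) G) Q],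
        Module.Finite (MonoidAlgebra (ZMod p) G) Q →
        Module.Projective (MonoidAlgebra (ZMod p) G) Q →
        Nonempty (ReductionWitness p G Q)) ↔
      IsSemiperfectRing (MonoidAlgebra (ZLoc p) G)) ∧
    (IsSemiperfectRing (MonoidAlgebra (ZLoc p) G) ↔
      IsSemiperfectRing (MonoidAlgebra (ZLoc p) H)) := by
  obtain ⟨π, hι, rfl⟩ := exists_leftInverse_subtype_of_normal hPnormal hmeet hjoin
  have := isSemisimpleRing_monoidAlgebra_zmod hH
  have semiperfect_G := isSemiperfectRing_iff_liftsIdempotents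
    (mapDomainRingHom_comp_groupRingToFp_surjective (p := p) hι)
    (ker_comp_le_jacobson groupRingToFp_surjective ker_groupRingToFp_le_jacobson
      (ker_mapDomainRingHom_le_jacobson hP))
  have semiperfect_H := isSemiperfectRing_iff_liftsIdempotents
    (groupRingToFp_surjective (p := p) (G := H)) ker_groupRingToFp_le_jacobson
  have lifts_iff := liftsIdempotents_mapDomainRingHom_comp_iff (p := p) hι
  refine ⟨⟨fun h => ?_, fun h Q _ _ _ _ => ?_⟩, ?_⟩
  · exact semiperfect_G.2 (lifts_iff.2 (liftsIdempotents_of_forall_reductionWitness hH hι hP h))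
  · exact nonempty_reductionWitness_of_liftsIdempotents hH hι hP (semiperfect_G.1 h) Q
  · rw [semiperfect_G, lifts_iff, semiperfect_H]
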